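/- arXiv:1606.00272 — 4 statements merged into one kernel-verified Lean document; each statement's English description precedes it below -/
import Mathlib

section
/- For every n ≥ 4, the functor St(n,−) satisfies the dilation principle: for every commutative ring A, every non-nilpotent a ∈ A, and every g ∈ St(n, A[X]) with (ev_{X=0})_*(g) = 1 ∈ St(n,A) and (λ_a)_*(g) = 1 ∈ St(n, A_a[X]), there exists m ≥ 0 such that (ev_{X=a^mY})_*(g) = 1 ∈ St(n, A[Y]). -/
open scoped commutatorElement

/-- Generators of the Steinberg group: triples (i,j,r) with i ≠ j. -/
abbrev StGen (n : ℕ) (R : Type) : Type := {p : Fin n × Fin n // p.1 ≠ p.2} × R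

/-- The Steinberg relations. -/
inductive StRels (n : ℕ) (R : Type) [CommRing R] : FreeGroup (StGen n R) → Prop
  | add (i j : Fin n) (hij : i ≠ j) (r s : R) :
      StRels n R (FreeGroup.of (⟨(i, j), hij⟩, r) * FreeGroup.of (⟨(i, j), hij⟩, s) *
        (FreeGroup.of (⟨(i, j), hij⟩, r + s))⁻¹)
  | commZero (i j h k : Fin n) (hij : i ≠ j) (hhk : h ≠ k) (hjh : j ≠ h) (hik : i ≠ k) (r s : R) :
      StRels n R ⁅(FreeGroup.of (⟨(i, j), hij⟩, r) : FreeGroup (StGen n R)), FreeGroup.of (⟨(h, k), hhk⟩, s)⁆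
  | commAdd (i j k : Fin n) (hij : i ≠ j) (hjk : j ≠ k) (hik : i ≠ k) (r s : R) :
      StRels n R (⁅(FreeGroup.of (⟨(i, j), hij⟩, r) : FreeGroup (StGen n R)), FreeGroup.of (⟨(j, k), hjk⟩, s)⁆ *
        (FreeGroup.of (⟨(i, k), hik⟩, r * s))⁻¹)

/-- The Steinberg group `St(n, R)`. -/
abbrev SteinbergGroup (n : ℕ) (R : Type) [CommRing R] : Type :=
  PresentedGroup {w | StRels n R w}

/-- The generator `x_{ij}(r)` of the Steinberg group. -/
def stx (n : ℕ) (R : Type) [CommRing R] (i j : Fin n) (hij : i ≠ j) (r : R) :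
    SteinbergGroup n R :=
  PresentedGroup.of (⟨(i, j), hij⟩, r)

/-- The dilation principle for the functor `St(n, -)`. -/
def DilationPrinciple (n : ℕ) : Prop :=
  ∀ (A : Type) [CommRing A] (a : A), ¬ IsNilpotent a →
  ∀ g : SteinbergGroup n (Polynomial A),
  ∀ (ev0 : SteinbergGroup n (Polynomial A) →* SteinbergGroup n A),
    (∀ (i j : Fin n) (hij : i ≠ j) (p : Polynomial A),
      ev0 (stx n (Polynomial A) i j hij p) = stx n A i j hij (Polynomial.eval 0 p)) →
    ev0 g = 1 →
  ∀ (la : SteinbergGroup n (Polynomial A) →*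
      SteinbergGroup n (Polynomial (Localization.Away a))),
    (∀ (i j : Fin n) (hij : i ≠ j) (p : Polynomial A),
      la (stx n (Polynomial A) i j hij p) =
        stx n (Polynomial (Localization.Away a)) i j hij
          (p.map (algebraMap A (Localization.Away a)))) →
    la g = 1 →
  ∃ m : ℕ, ∀ (ev : SteinbergGroup n (Polynomial A) →* SteinbergGroup n (Polynomial A)),
    (∀ (i j : Fin n) (hij : i ≠ j) (p : Polynomial A),
      ev (stx n (Polynomial A) i j hij p) =
        stx n (Polynomial A) i j hij (p.comp (Polynomial.C (a ^ m) * Polynomial.X))) →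
    ev g = 1


namespace DP

theorem tcomm {G : Type*} [Group G] (a b c w d : G) (hac : Commute a c) (hw : ⁅a, b⁆ = w)
    (hd : ⁅b, c⁆ = d) (hwd : Commute w d) (hcd : Commute c d) : ⁅a, d⁆ = ⁅w, c⁆ := by
  have h1 : a * b * a⁻¹ = w * b := by rw [← hw, commutatorElement_def]; group
  have h2 : a * c * a⁻¹ = c := by rw [hac.eq]; group
  have h3 : b * c * b⁻¹ = d * c := by rw [← hd, commutatorElement_def]; group
  have h4 : a * d * a⁻¹ = d * ⁅w, c⁆ := by
    calc a * d * a⁻¹ = (a * b * a⁻¹) * (a * c * a⁻¹) * (a * b * a⁻¹)⁻¹ * (a * c * a⁻¹)⁻¹ := by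
          rw [← hd, commutatorElement_def]; group
      _ = w * (b * c * b⁻¹) * w⁻¹ * c⁻¹ := by rw [h1, h2]; group
      _ = w * d * c * w⁻¹ * c⁻¹ := by rw [h3]; group
      _ = d * ⁅w, c⁆ := by rw [hwd.eq, commutatorElement_def]; group
  have h5 : Commute d ⁅w, c⁆ := by
    rw [commutatorElement_def]
    exact ((hwd.symm.mul_right hcd.symm).mul_right hwd.symm.inv_right).mul_right
      hcd.symm.inv_right
  rw [commutatorElement_def, h4, h5.eq]; group

theorem comm_iff {G : Type*} [Group G] {a b : G} : ⁅a, b⁆ = 1 ↔ Commute a b :=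
  commutatorElement_eq_one_iff_commute

theorem comm_commute {G : Type*} [Group G] {a b c : G} (h1 : Commute a c) (h2 : Commute b c) :
    Commute ⁅a, b⁆ c := by
  rw [commutatorElement_def]
  exact ((h1.mul_left h2).mul_left h1.inv_left).mul_left h2.inv_left

/-- `⁅a b, c⁆` when `⁅b, c⁆` commutes with `a` -/
theorem comm_mul_left {G : Type*} [Group G] {a b c : G} (h : Commute a ⁅b, c⁆) :
    ⁅a * b, c⁆ = ⁅b, c⁆ * ⁅a, c⁆ := by
  have : ⁅a * b, c⁆ = a * ⁅b, c⁆ * a⁻¹ * ⁅a, c⁆ := by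
    simp only [commutatorElement_def]; group
  rw [this, h.eq]; group

theorem comm_mul_right {G : Type*} [Group G] {a b c : G} (h : Commute b ⁅a, c⁆) :
    ⁅a, b * c⁆ = ⁅a, b⁆ * ⁅a, c⁆ := by
  have : ⁅a, b * c⁆ = ⁅a, b⁆ * (b * ⁅a, c⁆ * b⁻¹) := by
    simp only [commutatorElement_def]; group
  rw [this, h.eq]; group

/-- All Steinberg relations. -/
structure Sys {n : ℕ} {I H : Type*} [Add I] [Mul I] [Group H] (y : Fin n → Fin n → I → H) :
    Prop where
  add : ∀ i j r s, i ≠ j → y i j (r + s) = y i j r * y i j s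
  zer : ∀ i j h k r s, i ≠ j → h ≠ k → j ≠ h → i ≠ k → Commute (y i j r) (y h k s)
  com : ∀ i j k r s, i ≠ j → j ≠ k → i ≠ k → ⁅y i j r, y j k s⁆ = y i k (r * s)

/-- All Steinberg relations not involving the root `(p, q)`. -/
structure SysOff {n : ℕ} {I H : Type*} [Add I] [Mul I] [Group H] (p q : Fin n)
    (y : Fin n → Fin n → I → H) : Prop where
  add : ∀ i j r s, i ≠ j → ¬ (i = p ∧ j = q) → y i j (r + s) = y i j r * y i j s
  zer : ∀ i j h k r s, i ≠ j → h ≠ k → j ≠ h → i ≠ k → ¬ (i = p ∧ j = q) → ¬ (h = p ∧ k = q) →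
    Commute (y i j r) (y h k s)
  com : ∀ i j k r s, i ≠ j → j ≠ k → i ≠ k → ¬ (i = p ∧ j = q) → ¬ (j = p ∧ k = q) →
    ¬ (i = p ∧ k = q) → ⁅y i j r, y j k s⁆ = y i k (r * s)

/-- common cancellable factors -/
def Fac (I : Type*) [Mul I] : Prop :=
  ∀ t t' : I, ∃ e t1 t1' : I, t = t1 * e ∧ t' = t1' * e ∧ ∀ x y, x * e = y * e → x = y

theorem exists_third {n : ℕ} (hn : 4 ≤ n) (i j k : Fin n) : ∃ l, l ≠ i ∧ l ≠ j ∧ l ≠ k := by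
  classical
  have : ({i, j, k} : Finset (Fin n)).card < (Finset.univ : Finset (Fin n)).card := by
    refine lt_of_le_of_lt Finset.card_le_three ?_
    simp; omega
  obtain ⟨l, -, hl⟩ := Finset.exists_mem_notMem_of_card_lt_card this
  simp at hl
  exact ⟨l, hl⟩

section elim
variable {n : ℕ} (hn : 4 ≤ n) {I H : Type*} [NonUnitalCommRing I] (hI : Fac I) [Group H]
  {p q : Fin n} (hpq : p ≠ q) {y : Fin n → Fin n → I → H} (hy : SysOff p q y)

theorem el1 {hpq : p ≠ q} (hy : SysOff p q y) {l m : Fin n} (hlp : l ≠ p) (hlq : l ≠ q) (hmp : m ≠ p)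
    (hmq : m ≠ q) (hlm : l ≠ m) (s u v : I) :
    ⁅y p l s, y l q (u * v)⁆ = ⁅y p m (s * u), y m q v⁆ := by
  refine tcomm (y p l s) (y l m u) (y m q v) _ _ ?_ ?_ ?_ ?_ ?_
  · apply hy.zer <;> grind
  · apply hy.com <;> grind
  · apply hy.com <;> grind
  · apply hy.zer <;> grind
  · apply hy.zer <;> grind

include hn hI hpq hy in
theorem elim_exists : ∃ Y : I → H, ∀ l, l ≠ p → l ≠ q → ∀ s t, ⁅y p l s, y l q t⁆ = Y (s * t) := by
  have fac1 : ∀ t : I, ∃ u v, t = u * v := fun t => by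
    obtain ⟨e, t1, -, h, -⟩ := hI t t
    exact ⟨t1, e, h⟩
  have E1 := fun {l m} => @el1 n I H _ _ p q y hpq hy l m
  -- balanced
  have bal : ∀ l, l ≠ p → l ≠ q → ∀ s x w, ⁅y p l s, y l q (x * w)⁆ = ⁅y p l (s * x), y l q w⁆ := by
    intro l h1 h2 s x w
    obtain ⟨m, h3, h4, h5⟩ := exists_third hn p q l
    obtain ⟨u, v, rfl⟩ := fac1 x
    rw [mul_assoc, E1 h1 h2 h3 h4 h5.symm, E1 h3 h4 h1 h2 h5, mul_assoc]
  have wd : ∀ l, l ≠ p → l ≠ q → ∀ s t s' t', s * t = s' * t' →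
      ⁅y p l s, y l q t⁆ = ⁅y p l s', y l q t'⁆ := by
    intro l h1 h2 s t s' t' h
    obtain ⟨e, t1, t1', rfl, rfl, hc⟩ := hI t t'
    rw [bal l h1 h2, bal l h1 h2, hc (s * t1) (s' * t1') (by rw [mul_assoc, h, mul_assoc])]
  obtain ⟨l, h1, h2, -⟩ := exists_third hn p q q
  choose f1 f2 hf using fac1
  refine ⟨fun h => ⁅y p l (f1 h), y l q (f2 h)⁆, ?_⟩
  intro m h3 h4 s t
  by_cases hlm : l = m
  · subst hlm
    exact wd _ h1 h2 _ _ _ _ (hf _)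
  · conv_lhs => rw [hf t, E1 h3 h4 h1 h2 (Ne.symm hlm)]
    apply wd _ h1 h2
    rw [mul_assoc, ← hf, ← hf]

include hn hI hpq hy in
theorem elim_sys : ∃ z : Fin n → Fin n → I → H, Sys z ∧
    ∀ i j, ¬ (i = p ∧ j = q) → z i j = y i j := by
  obtain ⟨Y, hY⟩ := elim_exists hn hI hpq hy
  have fac1 : ∀ t : I, ∃ u v, t = u * v := fun t => by
    obtain ⟨e, t1, -, h, -⟩ := hI t t
    exact ⟨t1, e, h⟩
  -- Y commutes with row p
  have c1 : ∀ k, k ≠ p → k ≠ q → ∀ h r, Commute (Y h) (y p k r) := by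
    intro k h1 h2 h r
    obtain ⟨l, h3, h4, h5⟩ := exists_third hn p q k
    obtain ⟨s, t, rfl⟩ := fac1 h
    rw [← hY l h3 h4]
    apply comm_commute <;> apply hy.zer <;> grind
  have c2 : ∀ k, k ≠ p → k ≠ q → ∀ h r, Commute (Y h) (y k q r) := by
    intro k h1 h2 h r
    obtain ⟨l, h3, h4, h5⟩ := exists_third hn p q k
    obtain ⟨s, t, rfl⟩ := fac1 h
    rw [← hY l h3 h4]
    apply comm_commute <;> apply hy.zer <;> grind
  have c3 : ∀ h k, h ≠ k → h ≠ p → h ≠ q → k ≠ p → k ≠ q → ∀ x r, Commute (Y x) (y h k r) := by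
    intro h k hk h1 h2 h3 h4 x r
    obtain ⟨s, t, rfl⟩ := fac1 x
    rw [← hY h h1 h2]
    have e1 : ⁅y p h s, y h k r⁆ = y p k (s * r) := by apply hy.com <;> grind
    have e2 : Commute (y h q t) (y h k r) := by apply hy.zer <;> grind
    have e3 : Commute (y p k (s * r)) (y p h s) := by apply hy.zer <;> grind
    have e4 : Commute (y p k (s * r)) (y h q t) := by apply hy.zer <;> grind
    have e5 : Commute (y p k (s * r)) (y h k r) := by apply hy.zer <;> grind
    generalize y p k (s * r) = e at *
    generalize y p h s = a at *
    generalize y h q t = b at *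
    generalize y h k r = d at *
    have f1 : d⁻¹ * a * d = e * a := by
      have : a * d = e * d * a := by rw [← e1, commutatorElement_def]; group
      rw [mul_assoc, this, e5.eq]; group
    have f2 : d⁻¹ * b * d = b := by rw [mul_assoc, e2.eq]; group
    have f3 : d⁻¹ * ⁅a, b⁆ * d = ⁅a, b⁆ := by
      calc d⁻¹ * ⁅a, b⁆ * d = ⁅d⁻¹ * a * d, d⁻¹ * b * d⁆ := by
            simp only [commutatorElement_def]; group
        _ = ⁅a, b⁆ := by
          rw [f1, f2, comm_mul_left, comm_iff.2 e4, mul_one]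
          exact (comm_commute e3.symm e4.symm).symm
    have : ⁅a, b⁆ * d = d * ⁅a, b⁆ := by
      conv_rhs => rw [← f3]
      group
    exact this
  have c4 : ∀ h h', Commute (Y h) (Y h') := by
    intro h h'
    obtain ⟨l, h3, h4, -⟩ := exists_third hn p q q
    obtain ⟨s, t, rfl⟩ := fac1 h'
    rw [← hY l h3 h4]
    exact (comm_commute (c1 l h3 h4 h s).symm (c2 l h3 h4 h t).symm).symm
  have cZ : ∀ h k, h ≠ k → q ≠ h → p ≠ k → ¬ (h = p ∧ k = q) → ∀ x r, Commute (Y x) (y h k r) := by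
    intro h k hk h1 h2 h3 x r
    by_cases hp : h = p
    · subst hp
      exact c1 k (Ne.symm h2) (by grind) _ _
    · by_cases hq : k = q
      · subst hq
        exact c2 h hp (Ne.symm h1) _ _
      · exact c3 h k hk hp (Ne.symm h1) (Ne.symm h2) hq _ _
  have cL : ∀ k, k ≠ p → k ≠ q → ∀ h r, ⁅Y h, y q k r⁆ = y p k (h * r) := by
    intro k h1 h2 h r
    obtain ⟨l, h3, h4, h5⟩ := exists_third hn p q k
    obtain ⟨s, t, rfl⟩ := fac1 h
    rw [← tcomm (y p l s) (y l q t) (y q k r) (Y (s * t)) (y l k (t * r)), mul_assoc]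
    · apply hy.com <;> grind
    · apply hy.zer <;> grind
    · exact hY l h3 h4 _ _
    · apply hy.com <;> grind
    · apply cZ <;> grind
    · apply hy.zer <;> grind
  have cR : ∀ k, k ≠ p → k ≠ q → ∀ h r, ⁅y k p r, Y h⁆ = y k q (r * h) := by
    intro k h1 h2 h r
    obtain ⟨l, h3, h4, h5⟩ := exists_third hn p q k
    obtain ⟨s, t, rfl⟩ := fac1 h
    rw [tcomm (y k p r) (y p l s) (y l q t) (y k l (r * s)) (Y (s * t)), ← mul_assoc]
    · apply hy.com <;> grind
    · apply hy.zer <;> grind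
    · apply hy.com <;> grind
    · exact hY l h3 h4 _ _
    · exact (cZ k l h5.symm (by grind) (by grind) (by grind) _ _).symm
    · exact (c2 l h3 h4 _ _).symm
  have cA : ∀ h h', Y (h + h') = Y h * Y h' := by
    intro h h'
    obtain ⟨l, h3, h4, -⟩ := exists_third hn p q q
    obtain ⟨e, t1, t1', rfl, rfl, -⟩ := hI h h'
    rw [← add_mul, ← hY l h3 h4, hy.add, comm_mul_left, hY l h3 h4, hY l h3 h4, (c4 _ _).eq]
    · rw [hY l h3 h4]; exact (c1 l h3 h4 _ _).symm
    · exact Ne.symm h3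
    · grind
  refine ⟨fun i j => if i = p ∧ j = q then Y else y i j, ⟨?_, ?_, ?_⟩, ?_⟩
  · intro i j r s hij
    split_ifs with h
    · exact cA _ _
    · exact hy.add _ _ _ _ hij h
  · intro i j h k r s hij hhk hjh hik
    split_ifs with h1 h2 h2
    · exact c4 _ _
    · apply cZ <;> grind
    · apply Commute.symm; apply cZ <;> grind
    · exact hy.zer _ _ _ _ _ _ hij hhk hjh hik h1 h2
  · intro i j k r s hij hjk hik
    by_cases h1 : i = p ∧ j = q
    · obtain ⟨rfl, rfl⟩ := h1
      rw [if_pos ⟨rfl, rfl⟩, if_neg (by grind), if_neg (by grind)]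
      apply cL <;> grind
    by_cases h2 : j = p ∧ k = q
    · obtain ⟨rfl, rfl⟩ := h2
      rw [if_neg (by grind), if_pos ⟨rfl, rfl⟩, if_neg (by grind)]
      apply cR <;> grind
    by_cases h3 : i = p ∧ k = q
    · obtain ⟨rfl, rfl⟩ := h3
      rw [if_neg h1, if_neg h2, if_pos ⟨rfl, rfl⟩]
      apply hY <;> grind
    · rw [if_neg h1, if_neg h2, if_neg h3]
      exact hy.com _ _ _ _ _ hij hjk hik h1 h2 h3
  · intro i j h
    simp only [if_neg h]

end elim

/-- Steinberg relations for a nonunital ring -/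
inductive NRels (n : ℕ) (I : Type) [NonUnitalCommRing I] : FreeGroup (StGen n I) → Prop
  | add (i j : Fin n) (hij : i ≠ j) (r s : I) :
      NRels n I (FreeGroup.of (⟨(i, j), hij⟩, r) * FreeGroup.of (⟨(i, j), hij⟩, s) *
        (FreeGroup.of (⟨(i, j), hij⟩, r + s))⁻¹)
  | commZero (i j h k : Fin n) (hij : i ≠ j) (hhk : h ≠ k) (hjh : j ≠ h) (hik : i ≠ k) (r s : I) :
      NRels n I ⁅(FreeGroup.of (⟨(i, j), hij⟩, r) : FreeGroup (StGen n I)),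
        FreeGroup.of (⟨(h, k), hhk⟩, s)⁆
  | commAdd (i j k : Fin n) (hij : i ≠ j) (hjk : j ≠ k) (hik : i ≠ k) (r s : I) :
      NRels n I (⁅(FreeGroup.of (⟨(i, j), hij⟩, r) : FreeGroup (StGen n I)),
        FreeGroup.of (⟨(j, k), hjk⟩, s)⁆ * (FreeGroup.of (⟨(i, k), hik⟩, r * s))⁻¹)

/-- nonunital Steinberg group -/
abbrev NSt (n : ℕ) (I : Type) [NonUnitalCommRing I] : Type := PresentedGroup {w | NRels n I w}

/-- generators, total -/
def nx {n : ℕ} {I : Type} [NonUnitalCommRing I] (i j : Fin n) (r : I) : NSt n I :=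
  if hij : i ≠ j then PresentedGroup.of (⟨(i, j), hij⟩, r) else 1

/-- generators, total -/
def sx {n : ℕ} {R : Type} [CommRing R] (i j : Fin n) (r : R) : SteinbergGroup n R :=
  if hij : i ≠ j then stx n R i j hij r else 1

theorem nx_sys {n : ℕ} {I : Type} [NonUnitalCommRing I] :
    Sys (nx : Fin n → Fin n → I → NSt n I) where
  add i j r s hij := by
    have := PresentedGroup.one_of_mem (rels := {w | NRels n I w}) (NRels.add i j hij r s)
    simp only [map_mul, map_inv] at this
    simp only [nx, dif_pos hij]
    exact (mul_inv_eq_one.1 this).symm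
  zer i j h k r s hij hhk hjh hik := by
    have := PresentedGroup.one_of_mem (rels := {w | NRels n I w})
      (NRels.commZero i j h k hij hhk hjh hik r s)
    simp only [map_commutatorElement] at this
    simp only [nx, dif_pos hij, dif_pos hhk]
    exact comm_iff.1 this
  com i j k r s hij hjk hik := by
    have := PresentedGroup.one_of_mem (rels := {w | NRels n I w})
      (NRels.commAdd i j k hij hjk hik r s)
    simp only [map_commutatorElement, map_mul, map_inv] at this
    simp only [nx, dif_pos hij, dif_pos hjk, dif_pos hik]
    exact mul_inv_eq_one.1 this

theorem sx_sys {n : ℕ} {R : Type} [CommRing R] :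
    Sys (sx : Fin n → Fin n → R → SteinbergGroup n R) where
  add i j r s hij := by
    have := PresentedGroup.one_of_mem (rels := {w | StRels n R w}) (StRels.add i j hij r s)
    simp only [map_mul, map_inv] at this
    simp only [sx, dif_pos hij]
    exact (mul_inv_eq_one.1 this).symm
  zer i j h k r s hij hhk hjh hik := by
    have := PresentedGroup.one_of_mem (rels := {w | StRels n R w})
      (StRels.commZero i j h k hij hhk hjh hik r s)
    simp only [map_commutatorElement] at this
    simp only [sx, dif_pos hij, dif_pos hhk]
    exact comm_iff.1 this
  com i j k r s hij hjk hik := by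
    have := PresentedGroup.one_of_mem (rels := {w | StRels n R w})
      (StRels.commAdd i j k hij hjk hik r s)
    simp only [map_commutatorElement, map_mul, map_inv] at this
    simp only [sx, dif_pos hij, dif_pos hjk, dif_pos hik]
    exact mul_inv_eq_one.1 this

theorem nlift {n : ℕ} {I : Type} [NonUnitalCommRing I] {H : Type*} [Group H]
    {y : Fin n → Fin n → I → H} (hy : Sys y) :
    ∃ f : NSt n I →* H, ∀ i j, i ≠ j → ∀ r, f (nx i j r) = y i j r := by
  refine ⟨PresentedGroup.toGroup (f := fun g : StGen n I => y g.1.1.1 g.1.1.2 g.2) ?_, ?_⟩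
  · rintro w (⟨i, j, hij, r, s⟩ | ⟨i, j, h, k, hij, hhk, hjh, hik, r, s⟩ |
      ⟨i, j, k, hij, hjk, hik, r, s⟩)
    · simp [hy.add i j r s hij]
    · simp only [map_commutatorElement, FreeGroup.lift_apply_of]
      exact comm_iff.2 (hy.zer _ _ _ _ _ _ hij hhk hjh hik)
    · simp only [map_commutatorElement, FreeGroup.lift_apply_of, map_mul, map_inv]
      rw [hy.com _ _ _ _ _ hij hjk hik, mul_inv_cancel]
  · intro i j hij r
    rw [nx, dif_pos hij, PresentedGroup.toGroup.of]

theorem slift {n : ℕ} {R : Type} [CommRing R] {H : Type*} [Group H]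
    {y : Fin n → Fin n → R → H} (hy : Sys y) :
    ∃ f : SteinbergGroup n R →* H, ∀ i j, i ≠ j → ∀ r, f (sx i j r) = y i j r := by
  refine ⟨PresentedGroup.toGroup (f := fun g : StGen n R => y g.1.1.1 g.1.1.2 g.2) ?_, ?_⟩
  · rintro w (⟨i, j, hij, r, s⟩ | ⟨i, j, h, k, hij, hhk, hjh, hik, r, s⟩ |
      ⟨i, j, k, hij, hjk, hik, r, s⟩)
    · simp [hy.add i j r s hij]
    · simp only [map_commutatorElement, FreeGroup.lift_apply_of]
      exact comm_iff.2 (hy.zer _ _ _ _ _ _ hij hhk hjh hik)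
    · simp only [map_commutatorElement, FreeGroup.lift_apply_of, map_mul, map_inv]
      rw [hy.com _ _ _ _ _ hij hjk hik, mul_inv_cancel]
  · intro i j hij r
    rw [sx, dif_pos hij, stx, PresentedGroup.toGroup.of]

theorem next {n : ℕ} {I : Type} [NonUnitalCommRing I] {H : Type*} [Group H]
    {f g : NSt n I →* H} (h : ∀ i j, i ≠ j → ∀ r, f (nx i j r) = g (nx i j r)) : f = g := by
  apply PresentedGroup.ext
  rintro ⟨⟨⟨i, j⟩, hij⟩, r⟩
  have := h i j hij r
  simpa only [nx, dif_pos hij] using this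

theorem sext {n : ℕ} {R : Type} [CommRing R] {H : Type*} [Group H]
    {f g : SteinbergGroup n R →* H} (h : ∀ i j, i ≠ j → ∀ r, f (sx i j r) = g (sx i j r)) :
    f = g := by
  apply PresentedGroup.ext
  rintro ⟨⟨⟨i, j⟩, hij⟩, r⟩
  have := h i j hij r
  simpa only [sx, dif_pos hij, stx] using this

theorem Sys.zero {n : ℕ} {I H : Type*} [AddGroup I] [Mul I] [Group H] {y : Fin n → Fin n → I → H}
    (hy : Sys y) {i j : Fin n} (hij : i ≠ j) : y i j 0 = 1 := by
  have := hy.add i j 0 0 hij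
  simpa using this

theorem Sys.neg {n : ℕ} {I H : Type*} [AddGroup I] [Mul I] [Group H] {y : Fin n → Fin n → I → H}
    (hy : Sys y) {i j : Fin n} (hij : i ≠ j) (r : I) : y i j (-r) = (y i j r)⁻¹ := by
  rw [eq_inv_iff_mul_eq_one, ← hy.add _ _ _ _ hij, neg_add_cancel, hy.zero hij]

/-- twisted generators: the action of `x_{pq}(c)` on `x_{ij}(r)` for `(i,j) ≠ (q,p)` -/
def tw {n : ℕ} {R I : Type} [CommRing R] [NonUnitalCommRing I] [Module R I] (p q : Fin n) (c : R)
    (i j : Fin n) (r : I) : NSt n I :=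
  if i = q then nx q j r * nx p j (c • r) else
  if j = p then nx i p r * nx i q (-(c • r)) else nx i j r

section
variable {n : ℕ} {R I : Type} [CommRing R] [NonUnitalCommRing I] [Module R I]

theorem twL (p q : Fin n) (c : R) (j : Fin n) (r : I) :
    tw p q c q j r = nx q j r * nx p j (c • r) := by simp [tw]
theorem twR (p q : Fin n) (c : R) (i : Fin n) (h : i ≠ q) (r : I) :
    tw p q c i p r = nx i p r * nx i q (-(c • r)) := by simp [tw, h]
theorem tw0 (p q : Fin n) (c : R) (i j : Fin n) (h : i ≠ q) (h' : j ≠ p) (r : I) :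
    tw p q c i j r = nx i j r := by simp [tw, h, h']

theorem tw_sys [IsScalarTower R I I] [SMulCommClass R I I] (p q : Fin n) (hpq : p ≠ q) (c : R) : SysOff q p (tw (I := I) p q c) := by
  have S := nx_sys (n := n) (I := I)
  refine ⟨?_, ?_, ?_⟩
  · intro i j r s hij hne
    by_cases hi : i = q
    · subst hi
      have hj : p ≠ j := by grind
      simp only [twL, smul_add, S.add _ _ _ _ hij, S.add _ _ _ _ hj]
      rw [mul_assoc, mul_assoc]; congr 1
      rw [← mul_assoc, ← mul_assoc]; congr 1
      exact S.zer _ _ _ _ _ _ hij hj (by grind) (by grind)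
    by_cases hj : j = p
    · subst hj
      simp only [twR _ _ _ _ hi, smul_add, neg_add, S.add _ _ _ _ hij, S.add _ _ _ _ hi]
      rw [mul_assoc, mul_assoc]; congr 1
      rw [← mul_assoc, ← mul_assoc]; congr 1
      exact S.zer _ _ _ _ _ _ hij hi (by grind) (by grind)
    simp only [tw0 _ _ _ _ _ hi hj, S.add _ _ _ _ hij]
  · have LR : ∀ j h r s, j ≠ q → j ≠ p → h ≠ q → h ≠ p → j ≠ h →
        Commute (tw (I := I) p q c q j r) (tw p q c h p s) := by
      intro j h r s h1 h2 h3 h4 h5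
      rw [twL, twR _ _ _ _ h3]
      rw [← comm_iff]
      have e1 : Commute (nx q j r) (nx h p s) := by apply S.zer <;> grind
      have e2 : ⁅nx h q (-(c • s)), nx q j r⁆ = nx h j (-(c • s) * r) := by apply S.com <;> grind
      have e3 : ⁅nx h p s, nx p j (c • r)⁆ = nx h j (s * (c • r)) := by apply S.com <;> grind
      have e4 : Commute (nx p j (c • r)) (nx h q (-(c • s))) := by apply S.zer <;> grind
      have e5 : nx h j (-(c • s) * r) = (nx h j (s * (c • r)))⁻¹ := by
        rw [← S.neg (by grind)]; congr 1
        rw [neg_mul, smul_mul_assoc, mul_smul_comm]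
      have e6 : ∀ x y, Commute (nx h j x) (nx h q (y : I)) := by
        intros; apply S.zer <;> grind
      have e7 : ∀ x y, Commute (nx q j x) (nx h j (y : I)) := by
        intros; apply S.zer <;> grind
      rw [comm_mul_left, comm_mul_right, comm_mul_right]
      · rw [comm_iff.2 e1, comm_iff.2 e4, ← commutatorElement_inv, e3,
          ← commutatorElement_inv (nx h q _), e2, e5]
        simp
      · rw [← commutatorElement_inv, e2]; apply Commute.inv_right; apply S.zer <;> grind
      · rw [comm_iff.2 e4]; exact Commute.one_right _
      · rw [comm_mul_right, comm_iff.2 e4, mul_one, ← commutatorElement_inv, e3]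
        · exact (e7 _ _).inv_right
        · rw [comm_iff.2 e4]; exact Commute.one_right _
    intro i j h k r s hij hhk hjh hik hne1 hne2
    by_cases hi : i = q
    · subst hi
      by_cases hh : h = i
      · subst hh
        rw [twL, twL]
        apply Commute.mul_left <;> apply Commute.mul_right <;> apply S.zer <;> grind
      by_cases hk : k = p
      · subst hk
        apply LR <;> grind
      · rw [twL, tw0 _ _ _ _ _ hh hk]
        apply Commute.mul_left <;> apply S.zer <;> grind
    by_cases hj : j = p
    · subst hj
      by_cases hh : h = q
      · subst hh
        apply Commute.symm; apply LR <;> grind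
      by_cases hk : k = j
      · subst hk
        rw [twR _ _ _ _ hi, twR _ _ _ _ hh]
        apply Commute.mul_left <;> apply Commute.mul_right <;> apply S.zer <;> grind
      · rw [twR _ _ _ _ hi, tw0 _ _ _ _ _ hh hk]
        apply Commute.mul_left <;> apply S.zer <;> grind
    rw [tw0 _ _ _ _ _ hi hj]
    by_cases hh : h = q
    · subst hh
      rw [twL]
      apply Commute.mul_right <;> apply S.zer <;> grind
    by_cases hk : k = p
    · subst hk
      rw [twR _ _ _ _ hh]
      apply Commute.mul_right <;> apply S.zer <;> grind
    rw [tw0 _ _ _ _ _ hh hk]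
    apply S.zer <;> grind
  · intro i j k r s hij hjk hik h1 h2 h3
    by_cases hi : i = q
    · subst hi
      have hj : j ≠ p := by grind
      have hk : k ≠ p := by grind
      rw [twL, twL, tw0 _ _ _ _ _ hij.symm hk, comm_mul_left, S.com _ _ _ _ _ hij hjk hik,
        S.com _ _ _ _ _ hj.symm hjk hk.symm, smul_mul_assoc]
      · apply S.zer <;> grind
      · rw [S.com _ _ _ _ _ hj.symm hjk hk.symm]
        apply S.zer <;> grind
    by_cases hj : j = p
    · subst hj
      rw [twR _ _ _ _ hi, tw0 _ _ _ _ _ hpq hjk.symm, tw0 _ _ _ _ _ hi hjk.symm]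
      have e : Commute (nx i q (-(c • r))) (nx j k s) := by apply S.zer <;> grind
      rw [comm_mul_left, comm_iff.2 e, one_mul]
      · apply S.com <;> grind
      · rw [comm_iff.2 e]; exact Commute.one_right _
    rw [tw0 _ _ _ _ _ hi hj]
    by_cases hjq : j = q
    · subst hjq
      have hk : k ≠ p := by grind
      have e : Commute (nx i j r) (nx p k (c • s)) := by apply S.zer <;> grind
      rw [twL, tw0 _ _ _ _ _ hi hk, comm_mul_right, comm_iff.2 e, mul_one]
      · apply S.com <;> grind
      · rw [comm_iff.2 e]; exact Commute.one_right _
    by_cases hk : k = p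
    · subst hk
      rw [twR _ _ _ _ hi, twR _ _ _ _ hjq, comm_mul_right, S.com _ _ _ _ _ hij hjk hik,
        S.com _ _ _ _ _ hij hjq hi, mul_neg, mul_smul_comm]
      rw [S.com _ _ _ _ _ hij hjq hi]
      apply S.zer <;> grind
    rw [tw0 _ _ _ _ _ hi hk, tw0 _ _ _ _ _ hjq hk]
    apply S.com <;> grind
end

section
variable {n : ℕ} {R I : Type} [CommRing R] [NonUnitalCommRing I] [Module R I]

theorem gen_ext {H : Type*} [Group H] (hI : Fac I) (T : Set (Fin n)) {t t' : Fin n} (ht : t ∈ T)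
    (ht' : t' ∉ T) {f g : NSt n I →* H}
    (h : ∀ a b, a ≠ b → (a ∈ T ↔ b ∉ T) → ∀ r, f (nx a b r) = g (nx a b r)) : f = g := by
  have S := nx_sys (n := n) (I := I)
  apply next
  intro i j hij r
  by_cases hc : i ∈ T ↔ j ∉ T
  · exact h i j hij hc r
  have : ∃ l, (i ∈ T ↔ l ∉ T) ∧ (l ∈ T ↔ j ∉ T) ∧ i ≠ l ∧ l ≠ j := by
    by_cases hi : i ∈ T
    · exact ⟨t', by grind⟩
    · exact ⟨t, by grind⟩
  obtain ⟨l, h1, h2, h3, h4⟩ := this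
  obtain ⟨e, r1, -, rfl, -⟩ := hI r r
  rw [← S.com i l j _ _ h3 h4 hij, map_commutatorElement, map_commutatorElement,
    h i l h3 h1, h l j h4 h2]

variable [IsScalarTower R I I] [SMulCommClass R I I]

theorem tau_exists (hn : 4 ≤ n) (hI : Fac I) (p q : Fin n) (hpq : p ≠ q) (c : R) :
    ∃ f : NSt n I →* NSt n I, ∀ i j, i ≠ j → ¬ (i = q ∧ j = p) → ∀ r,
      f (nx i j r) = tw p q c i j r := by
  obtain ⟨z, hz, hzy⟩ := elim_sys hn hI hpq.symm (tw_sys (I := I) p q hpq c)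
  obtain ⟨f, hf⟩ := nlift hz
  exact ⟨f, fun i j hij hne r => by rw [hf i j hij, hzy i j hne]⟩

theorem act_exists (hn : 4 ≤ n) (hI : Fac I) : ∃ Φ : SteinbergGroup n R →* MulAut (NSt n I),
    ∀ p q, p ≠ q → ∀ c i j, i ≠ j → ¬ (i = q ∧ j = p) → ∀ r,
      Φ (sx p q c) (nx i j r) = tw p q c i j r := by
  have S := nx_sys (n := n) (I := I)
  have : ∀ p q : Fin n, ∀ c : R, ∃ f : NSt n I →* NSt n I, p ≠ q → ∀ i j, i ≠ j →
      ¬ (i = q ∧ j = p) → ∀ r, f (nx i j r) = tw p q c i j r := by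
    intro p q c
    by_cases hpq : p = q
    · exact ⟨1, fun h => absurd hpq h⟩
    · obtain ⟨f, hf⟩ := tau_exists hn hI p q hpq c
      exact ⟨f, fun _ => hf⟩
  choose tau htau using this
  have tL : ∀ {p q : Fin n} {c : R} {j : Fin n} {r : I}, p ≠ q → j ≠ p → j ≠ q →
      tau p q c (nx q j r) = nx q j r * nx p j (c • r) := by
    intro p q c j r h1 h2 h3
    rw [htau p q c h1 q j h3.symm (by grind), twL]
  have tR : ∀ {p q : Fin n} {c : R} {i : Fin n} {r : I}, p ≠ q → i ≠ p → i ≠ q →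
      tau p q c (nx i p r) = nx i p r * nx i q (-(c • r)) := by
    intro p q c i r h1 h2 h3
    rw [htau p q c h1 i p h2 (by grind), twR _ _ _ _ h3]
  have t0 : ∀ {p q : Fin n} {c : R} {i j : Fin n} {r : I}, p ≠ q → i ≠ j → i ≠ q → j ≠ p →
      tau p q c (nx i j r) = nx i j r := by
    intro p q c i j r h1 h2 h3 h4
    rw [htau p q c h1 i j h2 (by grind), tw0 _ _ _ _ _ h3 h4]
  have tadd : ∀ p q c d, p ≠ q → (tau p q c).comp (tau p q d) = tau p q (c + d) := by
    intro p q c d hpq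
    obtain ⟨l, h1, h2, -⟩ := exists_third hn p q q
    refine gen_ext hI {l} (t := l) (t' := p) rfl (by grind) ?_
    intro a b hab hT r
    simp only [Set.mem_singleton_iff] at hT
    rw [MonoidHom.comp_apply]
    by_cases ha : a = q
    · subst ha
      have hb : b = l := by grind
      subst hb
      rw [tL hpq h1 h2, map_mul, tL hpq h1 h2, t0 hpq h1.symm hpq h1, tL hpq h1 h2, add_smul,
        S.add _ _ _ _ h1.symm, mul_assoc]
    by_cases hb : b = p
    · subst hb
      have ha : a = l := by grind
      subst ha
      rw [tR hpq h1 h2, map_mul, tR hpq h1 h2, t0 hpq h2 h2 hpq.symm, tR hpq h1 h2, add_smul,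
        neg_add, S.add _ _ _ _ h2, mul_assoc]
    rw [t0 hpq hab ha hb, t0 hpq hab ha hb, t0 hpq hab ha hb]
  have tzero : ∀ p q, p ≠ q → tau p q 0 = MonoidHom.id _ := by
    intro p q hpq
    obtain ⟨l, h1, h2, -⟩ := exists_third hn p q q
    refine gen_ext hI {l} (t := l) (t' := p) rfl (by grind) ?_
    intro a b hab hT r
    simp only [Set.mem_singleton_iff] at hT
    rw [MonoidHom.id_apply]
    by_cases ha : a = q
    · subst ha
      have hb : b = l := by grind
      subst hb
      rw [tL hpq h1 h2, zero_smul, S.zero h1.symm, mul_one]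
    by_cases hb : b = p
    · subst hb
      have ha : a = l := by grind
      subst ha
      rw [tR hpq h1 h2, zero_smul, neg_zero, S.zero h2, mul_one]
    rw [t0 hpq hab ha hb]
  have tzer : ∀ i j h k r s, i ≠ j → h ≠ k → j ≠ h → i ≠ k →
      (tau i j r).comp (tau h k s) = (tau h k s).comp (tau i j r) := by
    intro i j h k r s hij hhk hjh hik
    have : ∃ T : Set (Fin n), ∃ t t', t ∈ T ∧ t' ∉ T ∧ (i ∈ T ↔ j ∈ T) ∧ (h ∈ T ↔ k ∈ T) := by
      by_cases hd : h = i ∨ k = j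
      · obtain ⟨l, h1, h2, h3⟩ := exists_third hn i j (if h = i then k else h)
        refine ⟨{l}, l, i, rfl, by grind, ?_⟩
        simp only [Set.mem_singleton_iff]
        grind
      · refine ⟨{i, j}, i, h, by simp, by grind, by simp, ?_⟩
        simp only [Set.mem_insert_iff, Set.mem_singleton_iff]
        grind
    obtain ⟨T, t, t', ht, ht', hT1, hT2⟩ := this
    refine gen_ext hI T ht ht' ?_
    intro a b hab hT u
    rw [MonoidHom.comp_apply, MonoidHom.comp_apply]
    by_cases haj : a = j
    · subst haj
      have hbi : b ≠ i := by grind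
      by_cases hak : a = k
      · subst hak
        have hbh : b ≠ h := by grind
        rw [tL hhk hbh hab.symm, map_mul, tL hij hbi hab.symm, map_mul, tL hhk hbh hab.symm,
          t0 hij hbh.symm hjh.symm hbi, t0 hhk hbi.symm hik hbh, mul_assoc, mul_assoc]
        congr 1
        apply S.zer <;> grind
      by_cases hbh : b = h
      · subst hbh
        have e1 : i ≠ b := by grind
        rw [tR hhk hab hak, map_mul, tL hij hbi hab.symm, map_mul, tR hhk hab hak,
          tL hij (by grind) (by grind), tR hhk e1 hik]
        rw [mul_assoc, mul_assoc]; congr 1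
        rw [← mul_assoc, ← mul_assoc, smul_neg, smul_comm r s u]; congr 1
        apply S.zer <;> grind
      · rw [t0 hhk hab hak hbh, tL hij hbi hab.symm, map_mul, t0 hhk hab hak hbh,
          t0 hhk hbi.symm hik hbh]
    by_cases hbi : b = i
    · subst hbi
      by_cases hak : a = k
      · subst hak
        have hbh : b ≠ h := by grind
        rw [tL hhk hbh hab.symm, map_mul, tR hij hab haj, map_mul, tL hhk hbh hab.symm,
          tR hij hbh.symm hjh.symm, tL hhk (by grind) (by grind)]
        rw [mul_assoc, mul_assoc]; congr 1
        rw [← mul_assoc, ← mul_assoc, smul_neg, smul_comm r s u]; congr 1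
        apply S.zer <;> grind
      by_cases hbh : b = h
      · subst hbh
        rw [tR hhk hab hak, map_mul, tR hij hab haj, map_mul, tR hhk hab hak,
          t0 hij (by grind) haj hik.symm, t0 hhk (by grind) hak hjh]
        rw [mul_assoc, mul_assoc]; congr 1
        apply S.zer <;> grind
      · rw [t0 hhk hab hak hbh, tR hij hab haj, map_mul, t0 hhk hab hak hbh,
          t0 hhk haj hak hjh]
    rw [t0 hij hab haj hbi]
    by_cases hak : a = k
    · subst hak
      have hbh : b ≠ h := by grind
      rw [tL hhk hbh hab.symm, map_mul, t0 hij hab haj hbi, t0 hij hbh.symm hjh.symm hbi]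
    by_cases hbh : b = h
    · subst hbh
      rw [tR hhk hab hak, map_mul, t0 hij hab haj hbi, t0 hij hak haj hik.symm]
    · rw [t0 hhk hab hak hbh, t0 hij hab haj hbi]
  have tcom : ∀ i j k r s, i ≠ j → j ≠ k → i ≠ k →
      (tau i j r).comp (tau j k s) = (tau i k (r * s)).comp ((tau j k s).comp (tau i j r)) := by
    intro i j k r s hij hjk hik
    obtain ⟨l, h1, h2, h3⟩ := exists_third hn i j k
    refine gen_ext hI {l} (t := l) (t' := i) rfl (by grind) ?_
    intro a b hab hT u
    simp only [Set.mem_singleton_iff] at hT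
    simp only [MonoidHom.comp_apply]
    by_cases ha : a = l
    · subst ha
      by_cases hbi : b = i
      · subst hbi
        rw [t0 hjk hab h3 hij, tR hij h1 h2, map_mul, t0 hjk hab h3 hij, tR hjk h2 h3, map_mul,
          map_mul, tR hik h1 h3, t0 hik h2 h3 hij.symm, t0 hik h3 h3 hik.symm, mul_assoc]
        congr 1
        have : Commute (nx a j (-(r • u))) (nx a k (-(s • (-(r • u))))) := by
          apply S.zer <;> grind
        rw [this.eq, ← mul_assoc, ← S.add _ _ _ _ h3]
        have e : -((r * s) • u) + -(s • -(r • u)) = 0 := by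
          rw [smul_neg, neg_neg, mul_comm r s, mul_smul, neg_add_cancel]
        rw [e, S.zero h3, one_mul]
      by_cases hbj : b = j
      · subst hbj
        rw [tR hjk h2 h3, map_mul, t0 hij hab hab hbi, t0 hij h3 h2 hik.symm, tR hjk h2 h3,
          map_mul, t0 hik h2 h3 hbi, t0 hik h3 h3 hik.symm]
      · rw [t0 hjk hab h3 hbj, t0 hij hab h2 hbi, t0 hjk hab h3 hbj, t0 hik hab h3 hbi]
    · have hb : b = l := by grind
      subst hb
      by_cases hak : a = k
      · subst hak
        rw [tL hjk h2 h3, map_mul, t0 hij hab hjk.symm h1, tL hij h1 h2, tL hjk h2 h3, map_mul,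
          tL hik h1 h3, t0 hik h2.symm hjk h1, mul_assoc, mul_smul]
        congr 1
        apply S.zer <;> grind
      by_cases haj : a = j
      · subst haj
        rw [t0 hjk hab hak h2, tL hij h1 h2, map_mul, t0 hjk hab hak h2,
          t0 hjk h1.symm hik h2, map_mul, t0 hik hab hak h1, t0 hik h1.symm hik h1]
      · rw [t0 hjk hab hak h2, t0 hij hab haj h1, t0 hjk hab hak h2, t0 hik hab hak h1]
  let E : Fin n → Fin n → R → MulAut (NSt n I) := fun i j c =>
    if h : i ≠ j then MonoidHom.toMulEquiv (tau i j c) (tau i j (-c))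
      (by rw [tadd _ _ _ _ h, neg_add_cancel, tzero _ _ h])
      (by rw [tadd _ _ _ _ h, add_neg_cancel, tzero _ _ h]) else 1
  have hE : ∀ i j, i ≠ j → ∀ c x, E i j c x = tau i j c x := by
    intro i j h c x
    simp only [E, dif_pos h]; rfl
  have hS : Sys E := by
    refine ⟨?_, ?_, ?_⟩
    · intro i j r s hij
      ext x
      rw [MulAut.mul_apply, hE _ _ hij, hE _ _ hij, hE _ _ hij, ← tadd _ _ _ _ hij]; rfl
    · intro i j h k r s hij hhk hjh hik
      ext x
      rw [MulAut.mul_apply, MulAut.mul_apply, hE _ _ hij, hE _ _ hhk, hE _ _ hij, hE _ _ hhk]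
      exact DFunLike.congr_fun (tzer i j h k r s hij hhk hjh hik) x
    · intro i j k r s hij hjk hik
      rw [commutatorElement_def, mul_inv_eq_iff_eq_mul, mul_inv_eq_iff_eq_mul]
      ext x
      simp only [MulAut.mul_apply]
      rw [hE _ _ hij, hE _ _ hjk, hE _ _ hik, hE _ _ hjk, hE _ _ hij]
      exact DFunLike.congr_fun (tcom i j k r s hij hjk hik) x
  obtain ⟨Φ, hΦ⟩ := slift hS
  refine ⟨Φ, fun p q hpq c i j hij hne r => ?_⟩
  rw [hΦ _ _ hpq, hE _ _ hpq, htau _ _ _ hpq _ _ hij hne]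

end

section
variable {n : ℕ} {R D I : Type} [CommRing R] [CommRing D] [NonUnitalCommRing I] [Module R I]
  [IsScalarTower R I I] [SMulCommClass R I I] [Module D I]
  [IsScalarTower D I I] [SMulCommClass D I I]

/-- the characteristic property of the action -/
def IsAct (Φ : SteinbergGroup n R →* MulAut (NSt n I)) : Prop :=
  ∀ p q, p ≠ q → ∀ c i j, i ≠ j → ¬ (i = q ∧ j = p) → ∀ r,
      Φ (sx p q c) (nx i j r) = tw p q c i j r

open SemidirectProduct in
theorem delta_exists (Φ : SteinbergGroup n R →* MulAut (NSt n I)) (hΦ : IsAct Φ) :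
    ∃ δ : SteinbergGroup n (Unitization R I) →* NSt n I ⋊[Φ] SteinbergGroup n R,
      ∀ i j, i ≠ j → ∀ x, δ (sx i j x) = inl (nx i j x.snd) * inr (sx i j x.fst) := by
  have S := nx_sys (n := n) (I := I)
  have S' := sx_sys (n := n) (R := R)
  let P : Fin n → Fin n → I → NSt n I ⋊[Φ] SteinbergGroup n R := fun i j h => inl (nx i j h)
  let Q : Fin n → Fin n → R → NSt n I ⋊[Φ] SteinbergGroup n R := fun i j h => inr (sx i j h)
  have hP : Sys P := ⟨fun i j r s h => by simp only [P, S.add _ _ _ _ h, map_mul],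
    fun i j h k r s h1 h2 h3 h4 => (S.zer i j h k r s h1 h2 h3 h4).map _,
    fun i j k r s h1 h2 h3 => by
      simp only [P, ← map_commutatorElement, S.com _ _ _ _ _ h1 h2 h3]⟩
  have hQ : Sys Q := ⟨fun i j r s h => by simp only [Q, S'.add _ _ _ _ h, map_mul],
    fun i j h k r s h1 h2 h3 h4 => (S'.zer i j h k r s h1 h2 h3 h4).map _,
    fun i j k r s h1 h2 h3 => by
      simp only [Q, ← map_commutatorElement, S'.com _ _ _ _ _ h1 h2 h3]⟩
  have conj : ∀ p q, p ≠ q → ∀ c i j, i ≠ j → ¬ (i = q ∧ j = p) → ∀ r,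
      Q p q c * P i j r * (Q p q c)⁻¹ = inl (tw p q c i j r) := by
    intro p q hpq c i j hij hne r
    rw [← hΦ p q hpq c i j hij hne r, inl_aut, map_inv]
  have z : ∀ i j h k r s, i ≠ j → h ≠ k → j ≠ h → i ≠ k → Commute (Q i j r) (P h k s) := by
    intro i j h k r s hij hhk hjh hik
    have := conj i j hij r h k hhk (by grind) s
    rw [tw0 _ _ _ _ _ hjh.symm hik.symm] at this
    exact mul_inv_eq_iff_eq_mul.1 this
  have c1 : ∀ i j k r s, i ≠ j → j ≠ k → i ≠ k → ⁅Q i j r, P j k s⁆ = P i k (r • s) := by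
    intro i j k r s hij hjk hik
    have := conj i j hij r j k hjk (by grind) s
    rw [twL, map_mul] at this
    rw [commutatorElement_def, this]
    change P j k s * P i k _ * (P j k s)⁻¹ = _
    rw [(hP.zer j k i k s (r • s) hjk hik hik.symm hjk).eq, mul_inv_cancel_right]
  have c2 : ∀ i j k r s, i ≠ j → j ≠ k → i ≠ k → ⁅P i j s, Q j k r⁆ = P i k (r • s) := by
    intro i j k r s hij hjk hik
    have := conj j k hjk r i j hij (by grind) s
    rw [twR _ _ _ _ hik, map_mul] at this
    have h2 : ⁅P i j s, Q j k r⁆ = P i j s * (Q j k r * P i j s * (Q j k r)⁻¹)⁻¹ := by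
      rw [commutatorElement_def]; group
    rw [h2, this]
    change P i j s * (P i j s * P i k _)⁻¹ = _
    rw [hP.neg hik, mul_inv_rev, inv_inv,
      ((hP.zer i j i k s (r • s) hij hik hij.symm hik).inv_left).symm.eq, mul_inv_cancel_left]
  have hS : Sys (fun i j (x : Unitization R I) => P i j x.snd * Q i j x.fst) := by
    refine ⟨?_, ?_, ?_⟩
    · intro i j r s hij
      simp only [Unitization.fst_add, Unitization.snd_add, hP.add _ _ _ _ hij, hQ.add _ _ _ _ hij]
      rw [mul_assoc, mul_assoc]; congr 1
      rw [← mul_assoc, ← mul_assoc, (z i j i j r.fst s.snd hij hij hij.symm hij).eq]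
    · intro i j h k r s hij hhk hjh hik
      apply Commute.mul_left <;> apply Commute.mul_right
      · apply hP.zer <;> assumption
      · exact (z h k i j _ _ hhk hij hik.symm hjh.symm).symm
      · apply z <;> assumption
      · apply hQ.zer <;> assumption
    · intro i j k r s hij hjk hik
      have e1 : Commute (P i j r.snd) (P i k (r.fst • s.snd)) := by apply hP.zer <;> grind
      have e2 : Commute (P i j r.snd) (Q i k (r.fst * s.fst)) := by
        apply Commute.symm; apply z <;> grind
      have e3 : Commute (P j k s.snd) (Q i k (r.fst * s.fst)) := by
        apply Commute.symm; apply z <;> grind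
      have e4 : Commute (P j k s.snd) (P i k (s.fst • r.snd)) := by apply hP.zer <;> grind
      have e5 : ⁅Q i j r.fst, P j k s.snd * Q j k s.fst⁆ =
          P i k (r.fst • s.snd) * Q i k (r.fst * s.fst) := by
        rw [comm_mul_right, c1 _ _ _ _ _ hij hjk hik, hQ.com _ _ _ _ _ hij hjk hik]
        rw [hQ.com _ _ _ _ _ hij hjk hik]; exact e3
      rw [comm_mul_left, e5, comm_mul_right, hP.com _ _ _ _ _ hij hjk hik,
        c2 _ _ _ _ _ hij hjk hik, ← hP.add _ _ _ _ hik, Unitization.snd_mul,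
        Unitization.fst_mul, mul_assoc, ((z i k i k _ _ hik hik hik.symm hik)).eq, ← mul_assoc,
        ← hP.add _ _ _ _ hik]
      · congr 2; abel
      · rw [c2 _ _ _ _ _ hij hjk hik]; exact e4
      · rw [e5]; exact e1.mul_right e2
  obtain ⟨δ, hδ⟩ := slift hS
  exact ⟨δ, hδ⟩

theorem smap_exists {R S : Type} [CommRing R] [CommRing S] (f : R →+* S) :
    ∃ F : SteinbergGroup n R →* SteinbergGroup n S, ∀ i j, i ≠ j → ∀ r,
      F (sx i j r) = sx i j (f r) := by
  have S' := sx_sys (n := n) (R := S)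
  apply slift (y := fun i j r => sx i j (f r))
  refine ⟨?_, ?_, ?_⟩
  · intro i j r s h; simp only [map_add, S'.add _ _ _ _ h]
  · intro i j h k r s h1 h2 h3 h4; exact S'.zer _ _ _ _ _ _ h1 h2 h3 h4
  · intro i j k r s h1 h2 h3; simp only [map_mul, S'.com _ _ _ _ _ h1 h2 h3]

open SemidirectProduct in
theorem claim (hn : 4 ≤ n) (hI : Fac I) (f : D →+* R) (hf : ∀ (d : D) (x : I), d • x = f d • x)
    (F1 : SteinbergGroup n (Unitization D I) →* SteinbergGroup n D)
    (hF1 : ∀ i j, i ≠ j → ∀ x, F1 (sx i j x) = sx i j x.fst)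
    (F2 : SteinbergGroup n (Unitization D I) →* SteinbergGroup n (Unitization R I))
    (hF2 : ∀ i j, i ≠ j → ∀ x : Unitization D I, ∃ y : Unitization R I, y.fst = f x.fst ∧
      y.snd = x.snd ∧ F2 (sx i j x) = sx i j y)
    (g : SteinbergGroup n (Unitization D I)) (h1 : F1 g = 1) (h2 : F2 g = 1) : g = 1 := by
  have S := nx_sys (n := n) (I := I)
  have U := sx_sys (n := n) (R := Unitization D I)
  obtain ⟨ΦR, hR⟩ := act_exists (R := R) hn hI
  obtain ⟨ΦD, hD⟩ := act_exists (R := D) hn hI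
  obtain ⟨δR, hδR⟩ := delta_exists ΦR hR
  obtain ⟨δD, hδD⟩ := delta_exists ΦD hD
  obtain ⟨m, hm⟩ := smap_exists (n := n) f
  have compat : ΦD = ΦR.comp m := by
    apply sext
    intro p q hpq c
    rw [MonoidHom.comp_apply, hm _ _ hpq]
    obtain ⟨l, l1, l2, -⟩ := exists_third hn p q q
    have : (ΦD (sx p q c)).toMonoidHom = (ΦR (sx p q (f c))).toMonoidHom := by
      refine gen_ext hI {l} (t := l) (t' := p) rfl (by grind) ?_
      intro a b hab hT r
      simp only [Set.mem_singleton_iff] at hT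
      change ΦD (sx p q c) (nx a b r) = ΦR (sx p q (f c)) (nx a b r)
      rw [hD p q hpq c a b hab (by grind), hR p q hpq _ a b hab (by grind)]
      simp only [tw, hf]
    ext x
    exact DFunLike.congr_fun this x
  -- back map
  obtain ⟨β, hβ⟩ := nlift (n := n) (I := I) (y := fun i j h => sx i j (Unitization.inr h :
      Unitization D I)) ⟨fun i j r s h => by simp only [Unitization.inr_add, U.add _ _ _ _ h],
        fun i j h k r s h1 h2 h3 h4 => U.zer _ _ _ _ _ _ h1 h2 h3 h4,
        fun i j k r s h1 h2 h3 => by simp only [Unitization.inr_mul, U.com _ _ _ _ _ h1 h2 h3]⟩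
  obtain ⟨γ, hγ⟩ := smap_exists (n := n) (Unitization.inlRingHom D I)
  have equi : ∀ w, β.comp (ΦD w).toMonoidHom = (MulAut.conj (γ w)).toMonoidHom.comp β := by
    have gens : ∀ p q, p ≠ q → ∀ c, β.comp (ΦD (sx p q c)).toMonoidHom =
        (MulAut.conj (γ (sx p q c))).toMonoidHom.comp β := by
      intro p q hpq c
      obtain ⟨l, l1, l2, -⟩ := exists_third hn p q q
      refine gen_ext hI {l} (t := l) (t' := p) rfl (by grind) ?_
      intro a b hab hT r
      simp only [Set.mem_singleton_iff] at hT
      change β (ΦD (sx p q c) (nx a b r)) = γ (sx p q c) * β (nx a b r) * (γ (sx p q c))⁻¹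
      rw [hD p q hpq c a b hab (by grind), hγ _ _ hpq, hβ _ _ hab, eq_mul_inv_iff_mul_eq]
      by_cases ha : a = q
      · subst ha
        have hb : b = l := by grind
        subst hb
        have := U.com p a b (Unitization.inlRingHom D I c) (Unitization.inr r) hpq hab l1.symm
        rw [twL, map_mul, hβ _ _ hab, hβ _ _ l1.symm,
          (U.zer a b p b _ _ hab l1.symm l1 hab).eq]
        rw [commutatorElement_def, mul_inv_eq_iff_eq_mul, mul_inv_eq_iff_eq_mul] at this
        rw [this]
        congr 4
        simp [Unitization.inl_mul_inr]
      by_cases hb : b = p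
      · subst hb
        have ha : a = l := by grind
        subst ha
        have := U.com a b q (Unitization.inr r) (Unitization.inlRingHom D I c) hab hpq l2
        rw [twR _ _ _ _ l2, map_mul, hβ _ _ hab, hβ _ _ l2, Unitization.inr_neg, U.neg l2,
          (U.zer a b a q _ _ hab l2 hab.symm l2).inv_right.eq]
        rw [commutatorElement_def, mul_inv_eq_iff_eq_mul, mul_inv_eq_iff_eq_mul] at this
        rw [mul_assoc, this]
        rw [← mul_assoc, ← mul_assoc]
        have e : (Unitization.inr r * Unitization.inlRingHom D I c : Unitization D I)
            = Unitization.inr (c • r) := by simp [Unitization.inr_mul_inl]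
        rw [e, inv_mul_cancel, one_mul]
      · rw [tw0 _ _ _ _ _ ha hb, hβ _ _ hab]
        apply U.zer <;> grind
    let K : Subgroup (SteinbergGroup n D) :=
      { carrier := {w | ∀ x, β (ΦD w x) = γ w * β x * (γ w)⁻¹}
        one_mem' := by intro x; simp
        mul_mem' := by
          intro a b ha hb x
          rw [map_mul, MulAut.mul_apply, ha, hb, map_mul]; group
        inv_mem' := by
          intro a ha x
          have := ha ((ΦD a⁻¹) x)
          rw [← MulAut.mul_apply, ← map_mul, mul_inv_cancel, map_one, MulAut.one_apply] at this
          have e : γ a⁻¹ = (γ a)⁻¹ := map_inv γ a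
          rw [this, e]; group }
    have hK : ∀ w, w ∈ K := by
      apply PresentedGroup.generated_by
      rintro ⟨⟨⟨i, j⟩, hij⟩, r⟩ x
      have := DFunLike.congr_fun (gens i j hij r) x
      simp only [sx, dif_pos hij, stx] at this
      exact this
    exact fun w => MonoidHom.ext fun x => hK w x
  let B := SemidirectProduct.lift β γ equi
  have hB : B.comp δD = MonoidHom.id _ := by
    apply sext
    intro i j hij x
    rw [MonoidHom.comp_apply, hδD _ _ hij, map_mul, lift_inl, lift_inr, hβ _ _ hij, hγ _ _ hij,
      ← U.add _ _ _ _ hij, MonoidHom.id_apply]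
    congr 1
    ext <;> simp
  let M : NSt n I ⋊[ΦD] SteinbergGroup n D →* NSt n I ⋊[ΦR] SteinbergGroup n R :=
    SemidirectProduct.map (MonoidHom.id _) m (by intro w; rw [compat]; rfl)
  have hM : M.comp δD = δR.comp F2 := by
    apply sext
    intro i j hij x
    obtain ⟨y, y1, y2, hy⟩ := hF2 i j hij x
    rw [MonoidHom.comp_apply, hδD _ _ hij, MonoidHom.comp_apply, hy, hδR _ _ hij, map_mul, map_inl,
      map_inr, hm _ _ hij, y1, y2, MonoidHom.id_apply]
  have hr : rightHom.comp δD = F1 := by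
    apply sext
    intro i j hij x
    rw [MonoidHom.comp_apply, hδD _ _ hij, hF1 _ _ hij, map_mul, rightHom_inl, rightHom_inr,
      one_mul]
  have k1 : (δD g).right = 1 := by
    rw [← h1, ← hr]; rfl
  have k2 : (δD g).left = 1 := by
    have := DFunLike.congr_fun hM g
    rw [MonoidHom.comp_apply, MonoidHom.comp_apply, h2, map_one] at this
    exact congrArg SemidirectProduct.left this
  have k3 : δD g = 1 := SemidirectProduct.ext k2 k1
  have := DFunLike.congr_fun hB g
  rw [MonoidHom.comp_apply, k3, map_one] at this
  exact this.symm

end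

section
open Filter

/-- positive rational exponents -/
abbrev QP : Type := {q : ℚ // 0 < q}

/-- the natural number `q * j!` (for large `j`) -/
def EE (q : ℚ) (j : ℕ) : ℕ := ⌊q * (j.factorial : ℚ)⌋₊

theorem EE_eq {q : ℚ} (hq : 0 < q) : ∀ᶠ j in atTop, (EE q j : ℚ) = q * (j.factorial : ℚ) := by
  filter_upwards [eventually_ge_atTop q.den] with j hj
  obtain ⟨k, hk⟩ := Nat.dvd_factorial q.den_pos hj
  obtain ⟨m, hm⟩ := Int.eq_ofNat_of_zero_le (Rat.num_pos.2 hq).le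
  have h : q * (j.factorial : ℚ) = ((m * k : ℕ) : ℚ) := by
    have h1 : q * q.den = q.num := Rat.mul_den_eq_num q
    rw [hk]; push_cast
    rw [← mul_assoc, h1, hm]; push_cast; ring
  rw [EE, h, Nat.floor_natCast]

theorem EE_one (j : ℕ) : EE 1 j = j.factorial := by
  rw [EE, one_mul, Nat.floor_natCast]

theorem EE_add {q q' : ℚ} (hq : 0 < q) (hq' : 0 < q') :
    ∀ᶠ j in atTop, EE (q + q') j = EE q j + EE q' j := by
  filter_upwards [EE_eq hq, EE_eq hq', EE_eq (add_pos hq hq')] with j h1 h2 h3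
  have : ((EE (q + q') j : ℕ) : ℚ) = ((EE q j + EE q' j : ℕ) : ℚ) := by
    push_cast; rw [h1, h2, h3]; ring
  exact_mod_cast this

theorem EE_ge {q : ℚ} (hq : 0 < q) (N : ℕ) : ∀ᶠ j in atTop, N ≤ EE q j := by
  obtain ⟨k, hk⟩ := exists_nat_gt ((N : ℚ) / q)
  filter_upwards [eventually_ge_atTop k] with j hj
  apply Nat.le_floor
  have h1 : (k : ℚ) ≤ (j.factorial : ℚ) := by exact_mod_cast hj.trans (Nat.self_le_factorial j)
  have h2 : (N : ℚ) < k * q := (div_lt_iff₀ hq).1 hk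
  nlinarith

section
variable {D R : Type} [CommRing D] [CommRing R] (b : D) (f : D →+* R)
  (sur : ∀ z : R, ∃ (r : ℕ) (d : D), z * f b ^ r = f d)
  (ker : ∀ d, f d = 0 → ∃ s : ℕ, b ^ s * d = 0)

theorem rep_wd (ker : ∀ d, f d = 0 → ∃ s : ℕ, b ^ s * d = 0) {q : ℚ} (hq : 0 < q) {z : R}
    {r r' : ℕ} {d d' : D} (h : z * f b ^ r = f d) (h' : z * f b ^ r' = f d') :
    ∀ᶠ j in atTop, d * b ^ (EE q j - r) = d' * b ^ (EE q j - r') := by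
  obtain ⟨s, hs⟩ := ker (d * b ^ r' - d' * b ^ r) (by
    simp only [map_sub, map_mul, map_pow, ← h, ← h']; ring)
  filter_upwards [EE_ge hq (r + r' + s)] with j hj
  obtain ⟨k, hk⟩ := Nat.exists_eq_add_of_le hj
  have e1 : EE q j - r = r' + s + k := by omega
  have e2 : EE q j - r' = r + s + k := by omega
  rw [e1, e2]
  linear_combination b ^ k * hs

include sur ker in
theorem phi_exists : ∃ φ : QP → R → Germ (atTop : Filter ℕ) D,
    ∀ (q : QP) (z : R) (r : ℕ) (d : D), z * f b ^ r = f d →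
      φ q z = ((fun j => d * b ^ (EE q j - r) : ℕ → D) : Germ (atTop : Filter ℕ) D) := by
  choose r d hrd using sur
  refine ⟨fun q z => ((fun j => d z * b ^ (EE q j - r z) : ℕ → D) : Germ (atTop : Filter ℕ) D), ?_⟩
  intro q z r' d' h
  exact Germ.coe_eq.2 (rep_wd b f ker q.2 (hrd z) h)

include sur ker in
theorem phi_exists' : ∃ φ : QP → R →+ Germ (atTop : Filter ℕ) D,
    (∀ (q : QP) (z : R) (r : ℕ) (d : D), z * f b ^ r = f d →
      φ q z = ((fun j => d * b ^ (EE q j - r) : ℕ → D) : Germ (atTop : Filter ℕ) D)) ∧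
    (∀ q q' z z', φ q z * φ q' z' = φ (q + q') (z * z')) ∧
    (∀ q d z, φ q (f d * z) = ((fun _ => d : ℕ → D) : Germ (atTop : Filter ℕ) D) * φ q z) := by
  obtain ⟨φ, hφ⟩ := phi_exists b f sur ker
  have ha : ∀ q z z', φ q (z + z') = φ q z + φ q z' := by
    intro q z z'
    obtain ⟨r, d, h⟩ := sur z
    obtain ⟨r', d', h'⟩ := sur z'
    rw [hφ q z r d h, hφ q z' r' d' h', hφ q (z + z') (r + r') (d * b ^ r' + d' * b ^ r) (by
      simp only [map_add, map_mul, map_pow, ← h, ← h']; ring), ← Germ.coe_add, Germ.coe_eq]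
    filter_upwards [EE_ge q.2 (r + r')] with j hj
    obtain ⟨k, hk⟩ := Nat.exists_eq_add_of_le hj
    have e1 : EE q j - r = r' + k := by omega
    have e2 : EE q j - r' = r + k := by omega
    have e3 : EE q j - (r + r') = k := by omega
    rw [Pi.add_apply, e1, e2, e3]
    ring
  refine ⟨fun q => AddMonoidHom.mk' (φ q) (ha q), hφ, ?_, ?_⟩
  · intro q q' z z'
    obtain ⟨r, d, h⟩ := sur z
    obtain ⟨r', d', h'⟩ := sur z'
    change φ q z * φ q' z' = φ (q + q') (z * z')
    rw [hφ q z r d h, hφ q' z' r' d' h', hφ (q + q') (z * z') (r + r') (d * d') (by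
      simp only [map_mul, ← h, ← h']; ring), ← Germ.coe_mul, Germ.coe_eq]
    filter_upwards [EE_ge q.2 r, EE_ge q'.2 r', EE_add q.2 q'.2] with j hj hj' e
    obtain ⟨k, hk⟩ := Nat.exists_eq_add_of_le hj
    obtain ⟨k', hk'⟩ := Nat.exists_eq_add_of_le hj'
    have e1 : EE q j - r = k := by omega
    have e2 : EE q' j - r' = k' := by omega
    have e3 : EE ((q + q' : QP) : ℚ) j - (r + r') = k + k' := by
      rw [show ((q + q' : QP) : ℚ) = q + q' from rfl, e]; omega
    rw [Pi.mul_apply, e1, e2, e3]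
    ring
  · intro q c z
    obtain ⟨r, d, h⟩ := sur z
    change φ q (f c * z) = _ * φ q z
    rw [hφ q z r d h, hφ q (f c * z) r (c * d) (by
      simp only [map_mul, ← h]; ring), ← Germ.coe_mul, Germ.coe_eq]
    filter_upwards with j
    rw [Pi.mul_apply, mul_assoc]

/-- the nonunital ring of positive-exponent Puiseux-like sums -/
abbrev PI (R : Type) [CommRing R] : Type := AddMonoidAlgebra R QP

omit [CommRing D] in
theorem PI_div (t : PI R) : ∃ δ : ℚ, 0 < δ ∧ ∀ e : QP, (e : ℚ) < δ →
    ∃ t1 : PI R, t = t1 * AddMonoidAlgebra.single e 1 := by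
  induction t using AddMonoidAlgebra.induction_linear with
  | zero => exact ⟨1, one_pos, fun e _ => ⟨0, by simp⟩⟩
  | add x y hx hy =>
    obtain ⟨δ, h1, h2⟩ := hx
    obtain ⟨δ', h1', h2'⟩ := hy
    refine ⟨min δ δ', lt_min h1 h1', fun e he => ?_⟩
    obtain ⟨u, hu⟩ := h2 e (he.trans_le (min_le_left _ _))
    obtain ⟨v, hv⟩ := h2' e (he.trans_le (min_le_right _ _))
    exact ⟨u + v, by rw [hu, hv, add_mul]⟩
  | single q r =>
    refine ⟨q, q.2, fun e he => ⟨AddMonoidAlgebra.single ⟨q - e, sub_pos.2 he⟩ r, ?_⟩⟩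
    rw [AddMonoidAlgebra.single_mul_single, mul_one]
    congr 1
    apply Subtype.ext
    change (q : ℚ) = (q - e) + e
    ring

theorem PI_fac : Fac (PI R) := by
  intro t t'
  obtain ⟨δ, h1, h2⟩ := PI_div t
  obtain ⟨δ', h1', h2'⟩ := PI_div t'
  have hm : 0 < min δ δ' := lt_min h1 h1'
  let e : QP := ⟨min δ δ' / 2, half_pos hm⟩
  have he : (e : ℚ) < min δ δ' := half_lt_self hm
  obtain ⟨u, hu⟩ := h2 e (he.trans_le (min_le_left _ _))
  obtain ⟨v, hv⟩ := h2' e (he.trans_le (min_le_right _ _))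
  refine ⟨AddMonoidAlgebra.single e 1, u, v, hu, hv, ?_⟩
  intro x y hxy
  apply AddMonoidAlgebra.coeff_injective
  ext q
  have key : ∀ w : PI R, (w * AddMonoidAlgebra.single e 1).coeff (q + e) = w.coeff q := by
    intro w
    rw [AddMonoidAlgebra.coeff_mul_single_eq_coeff_mul q, mul_one]
    intro m _
    constructor
    · intro h
      apply Subtype.ext
      have : (m : ℚ) + e = q + e := congrArg Subtype.val h
      linarith
    · intro h; rw [h]
  rw [← key x, ← key y, hxy]

include sur ker in
theorem Phi_exists : ∃ φ : PI R →+ Germ (atTop : Filter ℕ) D,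
    (∀ (q : QP) (z : R) (r : ℕ) (d : D), z * f b ^ r = f d →
      φ (AddMonoidAlgebra.single q z) =
        ((fun j => d * b ^ (EE q j - r) : ℕ → D) : Germ (atTop : Filter ℕ) D)) ∧
    (∀ x y, φ (x * y) = φ x * φ y) ∧
    (∀ d x, φ (f d • x) = ((fun _ => d : ℕ → D) : Germ (atTop : Filter ℕ) D) * φ x) := by
  obtain ⟨φ, h1, h2, h3⟩ := phi_exists' b f sur ker
  let Φ : PI R →+ Germ (atTop : Filter ℕ) D :=
    (Finsupp.liftAddHom φ).comp (AddMonoidAlgebra.coeffAddEquiv : PI R ≃+ _).toAddMonoidHom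
  have hs : ∀ q z, Φ (AddMonoidAlgebra.single q z) = φ q z := by
    intro q z
    change Finsupp.liftAddHom φ (Finsupp.single q z) = _
    rw [Finsupp.liftAddHom_apply_single]
  refine ⟨Φ, ?_, ?_, ?_⟩
  · intro q z r d h; rw [hs]; exact h1 q z r d h
  · intro x y
    induction x using AddMonoidAlgebra.induction_linear with
    | zero => simp
    | add x x' hx hx' => rw [add_mul, map_add, hx, hx', map_add, add_mul]
    | single q z =>
      induction y using AddMonoidAlgebra.induction_linear with
      | zero => simp
      | add x x' hx hx' => rw [mul_add, map_add, hx, hx', map_add, mul_add]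
      | single q' z' => rw [AddMonoidAlgebra.single_mul_single, hs, hs, hs, h2]
  · intro d x
    induction x using AddMonoidAlgebra.induction_linear with
    | zero => simp
    | add x x' hx hx' => rw [smul_add, map_add, hx, hx', map_add, mul_add]
    | single q z => rw [AddMonoidAlgebra.smul_single, hs, hs, smul_eq_mul, h3]

end

theorem germ_hom {n : ℕ} {D : Type} [CommRing D] :
    ∃ F : SteinbergGroup n (Germ (atTop : Filter ℕ) D) →* Germ (atTop : Filter ℕ)
      (SteinbergGroup n D), ∀ i j, i ≠ j → ∀ u : ℕ → D,
      F (sx i j (u : Germ (atTop : Filter ℕ) D)) =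
        ((fun k => sx i j (u k) : ℕ → SteinbergGroup n D) : Germ (atTop : Filter ℕ) _) := by
  have S := sx_sys (n := n) (R := D)
  have h : Sys (fun i j (u : Germ (atTop : Filter ℕ) D) => Germ.map (sx (n := n) i j) u) := by
    refine ⟨?_, ?_, ?_⟩
    · intro i j r s h
      induction r using Germ.inductionOn with | _ r
      induction s using Germ.inductionOn with | _ s
      apply Germ.coe_eq.2
      filter_upwards with k
      exact S.add _ _ _ _ h
    · intro i j h k r s h1 h2 h3 h4
      induction r using Germ.inductionOn with | _ r
      induction s using Germ.inductionOn with | _ s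
      apply Germ.coe_eq.2
      filter_upwards with k'
      exact S.zer _ _ _ _ _ _ h1 h2 h3 h4
    · intro i j k r s h1 h2 h3
      induction r using Germ.inductionOn with | _ r
      induction s using Germ.inductionOn with | _ s
      apply Germ.coe_eq.2
      filter_upwards with k'
      exact S.com _ _ _ _ _ h1 h2 h3
  obtain ⟨F, hF⟩ := slift h
  exact ⟨F, fun i j hij u => hF i j hij u⟩

end

section
open Filter Polynomial

theorem main_gen {n : ℕ} (hn : 4 ≤ n) {A B D R : Type} [CommRing A] [CommRing B] [CommRing D]
    [CommRing R] (b : D) (f : D →+* R)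
    (sur : ∀ z : R, ∃ (r : ℕ) (d : D), z * f b ^ r = f d)
    (ker : ∀ d, f d = 0 → ∃ s : ℕ, b ^ s * d = 0) (x : D) (c : A →+* D) (c' : B →+* R)
    (h : A →+* B) (hc : ∀ a, f (c a) = c' (h a))
    (ev0 : SteinbergGroup n A[X] →* SteinbergGroup n A)
    (hev0 : ∀ i j, i ≠ j → ∀ p, ev0 (sx i j p) = sx i j (eval 0 p))
    (la : SteinbergGroup n A[X] →* SteinbergGroup n B[X])
    (hla : ∀ i j, i ≠ j → ∀ p, la (sx i j p) = sx i j (p.map h))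
    (g : SteinbergGroup n A[X]) (h1 : ev0 g = 1) (h2 : la g = 1) :
    ∀ᶠ k : ℕ in atTop, ∀ G : SteinbergGroup n A[X] →* SteinbergGroup n D,
      (∀ i j, i ≠ j → ∀ p, G (sx i j p) = sx i j (eval₂ c (x * b ^ k.factorial) p)) → G g = 1 := by
  letI : Module D (PI R) := Module.compHom (PI R) f
  have hf : ∀ (d : D) (y : PI R), d • y = f d • y := fun _ _ => rfl
  haveI : IsScalarTower D (PI R) (PI R) := ⟨fun d y z => by
    simp only [hf]; exact smul_assoc _ _ _⟩
  haveI : SMulCommClass D (PI R) (PI R) := ⟨fun d y z => by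
    simp only [hf]; exact smul_comm _ _ _⟩
  obtain ⟨φ, φ1, φ2, φ3⟩ := Phi_exists b f sur ker
  let k0 : D →+* Germ (atTop : Filter ℕ) D :=
    (Germ.coeRingHom (atTop : Filter ℕ)).comp (Pi.constRingHom ℕ D)
  have φ3' : ∀ d y, φ (d • y) = k0 d * φ y := fun d y => φ3 d y
  let ψ : Unitization D (PI R) →+* Germ (atTop : Filter ℕ) D :=
    { toFun := fun u => k0 u.fst + φ u.snd
      map_one' := by simp
      map_zero' := by simp
      map_add' := by intro u v; simp only [Unitization.fst_add, Unitization.snd_add, map_add]; ring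
      map_mul' := by
        intro u v
        simp only [Unitization.fst_mul, Unitization.snd_mul, map_add, map_mul, φ2, φ3']; ring }
  let θ : Unitization D (PI R) →+* Unitization R (PI R) :=
    { toFun := fun u => Unitization.inl (f u.fst) + Unitization.inr u.snd
      map_one' := by simp
      map_zero' := by simp
      map_add' := by
        intro u v; ext <;> simp
      map_mul' := by
        intro u v; ext <;> simp [hf] }
  let τ : PI R := AddMonoidAlgebra.single ⟨1, one_pos⟩ (f x)
  let eD : A[X] →+* Unitization D (PI R) :=
    eval₂RingHom ((Unitization.inlRingHom D (PI R)).comp c) (Unitization.inr τ)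
  let eR : B[X] →+* Unitization R (PI R) :=
    eval₂RingHom ((Unitization.inlRingHom R (PI R)).comp c') (Unitization.inr τ)
  obtain ⟨ED, hED⟩ := smap_exists (n := n) eD
  obtain ⟨ER, hER⟩ := smap_exists (n := n) eR
  obtain ⟨Cc, hCc⟩ := smap_exists (n := n) c
  obtain ⟨F1, hF1⟩ := smap_exists (n := n) (Unitization.fstHom D (PI R)).toRingHom
  obtain ⟨F2, hF2⟩ := smap_exists (n := n) θ
  obtain ⟨Ψ, hΨ⟩ := smap_exists (n := n) ψ
  obtain ⟨Γ, hΓ⟩ := germ_hom (n := n) (D := D)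
  have r1 : ((Unitization.fstHom D (PI R)).toRingHom).comp eD = c.comp (evalRingHom 0) := by
    apply Polynomial.ringHom_ext
    · intro a; simp [eD]
    · simp [eD]
  have r2 : θ.comp eD = eR.comp (mapRingHom h) := by
    apply Polynomial.ringHom_ext
    · intro a; simp [eD, eR, θ, hc]
    · simp [eD, eR, θ]
  have q1 : F1.comp ED = Cc.comp ev0 := by
    apply sext
    intro i j hij p
    rw [MonoidHom.comp_apply, MonoidHom.comp_apply, hED _ _ hij, hF1 _ _ hij, hev0 _ _ hij,
      hCc _ _ hij]
    congr 1
    exact DFunLike.congr_fun r1 p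
  have q2 : F2.comp ED = ER.comp la := by
    apply sext
    intro i j hij p
    rw [MonoidHom.comp_apply, MonoidHom.comp_apply, hED _ _ hij, hF2 _ _ hij, hla _ _ hij,
      hER _ _ hij]
    congr 1
    exact DFunLike.congr_fun r2 p
  have key : ED g = 1 := by
    refine claim (R := R) hn PI_fac f hf F1 (fun i j hij u => hF1 i j hij u) F2 ?_ _ ?_ ?_
    · intro i j hij u
      exact ⟨θ u, by simp [θ], by simp [θ], hF2 i j hij u⟩
    · have := DFunLike.congr_fun q1 g
      rw [MonoidHom.comp_apply, MonoidHom.comp_apply, h1, map_one] at this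
      exact this
    · have := DFunLike.congr_fun q2 g
      rw [MonoidHom.comp_apply, MonoidHom.comp_apply, h2, map_one] at this
      exact this
  have ex := fun k : ℕ => smap_exists (n := n) (eval₂RingHom c (x * b ^ k.factorial))
  choose G hG using ex
  let GG : SteinbergGroup n A[X] →* Germ (atTop : Filter ℕ) (SteinbergGroup n D) :=
    (Germ.coeMulHom (atTop : Filter ℕ)).comp (Pi.monoidHom G)
  have r3 : ψ.comp eD = (Germ.coeRingHom (atTop : Filter ℕ)).comp
      (RingHom.pi fun k : ℕ => eval₂RingHom c (x * b ^ k.factorial)) := by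
    apply Polynomial.ringHom_ext
    · intro a
      simp only [RingHom.comp_apply, eD, coe_eval₂RingHom, eval₂_C]
      change k0 (c a) + φ 0 = _
      rw [map_zero, add_zero]
      apply Germ.coe_eq.2
      filter_upwards with k
      simp
    · simp only [RingHom.comp_apply, eD, coe_eval₂RingHom, eval₂_X]
      change k0 0 + φ τ = _
      rw [map_zero, zero_add, φ1 _ (f x) 0 x (by simp)]
      apply Germ.coe_eq.2
      filter_upwards with k
      simp [EE_one]
  have q3 : (Γ.comp Ψ).comp ED = GG := by
    apply sext
    intro i j hij p
    rw [MonoidHom.comp_apply, MonoidHom.comp_apply, hED _ _ hij, hΨ _ _ hij]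
    have : ψ (eD p) = _ := DFunLike.congr_fun r3 p
    rw [this]
    refine (hΓ i j hij _).trans ?_
    apply Germ.coe_eq.2
    filter_upwards with k
    exact (hG k i j hij p).symm
  have fin : GG g = 1 := by
    rw [← q3, MonoidHom.comp_apply, key, map_one]
  have fin2 : ∀ᶠ k in atTop, G k g = 1 := Germ.coe_eq.1 fin
  filter_upwards [fin2] with k hk G' hG'
  have : G' = G k := by
    apply sext
    intro i j hij p
    rw [hG' _ _ hij, hG k _ _ hij]; rfl
  rw [this, hk]

theorem main {n : ℕ} (hn : 4 ≤ n) : DilationPrinciple n := by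
  intro A _ a _ g ev0 hev0 h1 la hla h2
  have cv : ∀ {S : Type} [CommRing S] (i j : Fin n) (hij : i ≠ j) (r : S),
      sx i j r = stx n S i j hij r := fun i j hij r => dif_pos hij
  have := main_gen hn (A := A) (B := Localization.Away a) (C a)
    (mapRingHom (algebraMap A (Localization.Away a))) ?_ ?_ X C C
    (algebraMap A (Localization.Away a)) (by simp) ev0
    (fun i j hij p => by rw [cv i j hij, cv i j hij, hev0]) la
    (fun i j hij p => by rw [cv i j hij, cv i j hij, hla]) g h1 h2
  · obtain ⟨k, hk⟩ := this.exists
    refine ⟨k.factorial, fun ev hev => hk ev fun i j hij p => ?_⟩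
    rw [cv i j hij, cv i j hij, hev, comp, C_pow, mul_comm]
  · intro z
    induction z using Polynomial.induction_on' with
    | add p q hp hq =>
      obtain ⟨r, d, h⟩ := hp
      obtain ⟨r', d', h'⟩ := hq
      refine ⟨r + r', d * C a ^ r' + d' * C a ^ r, ?_⟩
      rw [map_add, map_mul, map_mul, map_pow, map_pow, ← h, ← h']; ring
    | monomial k z =>
      obtain ⟨⟨y, ⟨_, ⟨r, rfl⟩⟩⟩, hy⟩ := IsLocalization.surj (Submonoid.powers a) z
      refine ⟨r, monomial k y, ?_⟩
      simp only [coe_mapRingHom, map_C, map_monomial, ← C_pow, monomial_mul_C] at hy ⊢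
      rw [← hy, map_pow]
  · intro d
    have aux : ∀ N : ℕ, (mapRingHom (algebraMap A (Localization.Away a))) d = 0 →
        ∃ s : ℕ, ∀ k < N, a ^ s * d.coeff k = 0 := by
      intro N hd
      induction N with
      | zero => exact ⟨0, by simp⟩
      | succ N ih =>
        obtain ⟨s, hs⟩ := ih
        have e : algebraMap A (Localization.Away a) (d.coeff N) = 0 := by
          have := congrArg (fun p => p.coeff N) hd
          simpa using this
        obtain ⟨⟨_, ⟨t, rfl⟩⟩, ht⟩ :=
          (IsLocalization.map_eq_zero_iff (Submonoid.powers a) _ _).1 e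
        refine ⟨s + t, fun k hk => ?_⟩
        rcases Nat.lt_succ_iff_lt_or_eq.1 hk with hk | rfl
        · rw [pow_add, mul_right_comm, hs k hk, zero_mul]
        · have ht' : a ^ t * d.coeff k = 0 := ht
          rw [pow_add, mul_assoc, ht', mul_zero]
    intro hd
    obtain ⟨s, hs⟩ := aux (d.natDegree + 1) hd
    refine ⟨s, ?_⟩
    ext k
    rw [← C_pow, coeff_C_mul, coeff_zero]
    by_cases hk : k < d.natDegree + 1
    · exact hs k hk
    · rw [coeff_eq_zero_of_natDegree_lt (by omega), mul_zero]

end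

end DP

theorem stmt6 (n : ℕ) (hn : 4 ≤ n) : DilationPrinciple n := by
  exact DP.main hn
end

section
/- Let R be a commutative ring, I an ideal of R, and n ≥ 4. The group St*(n,R,I) is generated by the set of elements {F(Me₁, (M⁻¹)ᵗe₂·a) : M ∈ E(n,R), a ∈ I}. -/
/-- The set of elementary transvections inside `GL n R`. -/
def transvectionSet (n : ℕ) (R : Type) [CommRing R] :
    Set (Matrix.GeneralLinearGroup (Fin n) R) :=
  {M | ∃ (i j : Fin n) (_ : i ≠ j) (r : R),
    (M : Matrix (Fin n) (Fin n) R) = 1 + Matrix.single i j r}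

/-- The elementary subgroup `E(n, R) ≤ GL(n, R)`. -/
def Elem (n : ℕ) (R : Type) [CommRing R] : Subgroup (Matrix.GeneralLinearGroup (Fin n) R) :=
  Subgroup.closure (transvectionSet n R)

/-- The set `E(n,R)e₁` of first columns of elementary matrices. -/
def Ecol (n : ℕ) (R : Type) [CommRing R] [NeZero n] : Set (Fin n → R) :=
  {u | ∃ M ∈ Elem n R, u = fun i => (M : Matrix (Fin n) (Fin n) R) i 0}

/-- The matrix `t(u, v) = 1 + u·vᵗ`. -/
def tMat {n : ℕ} {R : Type} [CommRing R] (u v : Fin n → R) : Matrix (Fin n) (Fin n) R :=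
  1 + Matrix.vecMulVec u v

/-- The `k`-th column of an invertible matrix. -/
def colM {n : ℕ} {R : Type} [CommRing R] (M : Matrix.GeneralLinearGroup (Fin n) R)
    (k : Fin n) : Fin n → R :=
  fun i => (M : Matrix (Fin n) (Fin n) R) i k

/-- The `k`-th column of the contragredient matrix `M* = (Mᵗ)⁻¹ = (M⁻¹)ᵗ`. -/
def starCol {n : ℕ} {R : Type} [CommRing R] (M : Matrix.GeneralLinearGroup (Fin n) R)
    (k : Fin n) : Fin n → R :=
  fun i => ((M⁻¹ : Matrix.GeneralLinearGroup (Fin n) R) : Matrix (Fin n) (Fin n) R) k i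

/-- Unimodularity of the `n × 2` matrix with columns `u`, `w`: it admits a left inverse. -/
def Unimodular2 {n : ℕ} {R : Type} [CommRing R] (u w : Fin n → R) : Prop :=
  ∃ x y : Fin n → R,
    dotProduct x u = 1 ∧ dotProduct x w = 0 ∧
    dotProduct y u = 0 ∧ dotProduct y w = 1
/-- Generators `F(u,v)` and `S(u,v)` of the group `St*(n, R, I)`. -/
inductive StarGen (n : ℕ) (R : Type) [CommRing R] [NeZero n] (I : Ideal R) : Type
  | F (u v : Fin n → R) (hu : u ∈ Ecol n R) (hv : ∀ i, v i ∈ I)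
      (ho : dotProduct u v = 0) : StarGen n R I
  | S (u v : Fin n → R) (hu : ∀ i, u i ∈ I) (hv : v ∈ Ecol n R)
      (ho : dotProduct u v = 0) : StarGen n R I

/-- The relations (R1)–(R4) of the group `St*(n, R, I)`. -/
inductive StarRels (n : ℕ) (R : Type) [CommRing R] [NeZero n] (I : Ideal R) :
    FreeGroup (StarGen n R I) → Prop
  | addF (u v w : Fin n → R) (hu : u ∈ Ecol n R) (hv : ∀ i, v i ∈ I) (hw : ∀ i, w i ∈ I)
      (hvw : ∀ i, (v + w) i ∈ I) (o1 : dotProduct u v = 0)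
      (o2 : dotProduct u w = 0) (o3 : dotProduct u (v + w) = 0) :
      StarRels n R I ((FreeGroup.of (StarGen.F u v hu hv o1) : FreeGroup (StarGen n R I)) *
        FreeGroup.of (StarGen.F u w hu hw o2) * (FreeGroup.of (StarGen.F u (v + w) hu hvw o3))⁻¹)
  | addS (u w v : Fin n → R) (hu : ∀ i, u i ∈ I) (hw : ∀ i, w i ∈ I)
      (huw : ∀ i, (u + w) i ∈ I) (hv : v ∈ Ecol n R) (o1 : dotProduct u v = 0)
      (o2 : dotProduct w v = 0) (o3 : dotProduct (u + w) v = 0) :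
      StarRels n R I ((FreeGroup.of (StarGen.S u v hu hv o1) : FreeGroup (StarGen n R I)) *
        FreeGroup.of (StarGen.S w v hw hv o2) * (FreeGroup.of (StarGen.S (u + w) v huw hv o3))⁻¹)
  | conjF (u v u' v' : Fin n → R) (hu : u ∈ Ecol n R) (hv : ∀ i, v i ∈ I)
      (o1 : dotProduct u v = 0) (hu' : u' ∈ Ecol n R) (hv' : ∀ i, v' i ∈ I)
      (o2 : dotProduct u' v' = 0)
      (hu'' : Matrix.mulVec (tMat u v) u' ∈ Ecol n R)
      (hv'' : ∀ i, Matrix.mulVec (1 - Matrix.vecMulVec v u) v' i ∈ I)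
      (o3 : dotProduct (Matrix.mulVec (tMat u v) u')
        (Matrix.mulVec (1 - Matrix.vecMulVec v u) v') = 0) :
      StarRels n R I ((FreeGroup.of (StarGen.F u v hu hv o1) : FreeGroup (StarGen n R I)) *
        FreeGroup.of (StarGen.F u' v' hu' hv' o2) * (FreeGroup.of (StarGen.F u v hu hv o1))⁻¹ *
        (FreeGroup.of (StarGen.F (Matrix.mulVec (tMat u v) u')
          (Matrix.mulVec (1 - Matrix.vecMulVec v u) v') hu'' hv'' o3))⁻¹)
  | coinc (M : Matrix.GeneralLinearGroup (Fin n) R) (hM : M ∈ Elem n R) (a : R) (ha : a ∈ I)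
      (h1 : colM M 0 ∈ Ecol n R) (h2 : ∀ i, (a • starCol M 1) i ∈ I)
      (h3 : dotProduct (colM M 0) (a • starCol M 1) = 0)
      (h4 : ∀ i, (a • colM M 0) i ∈ I) (h5 : starCol M 1 ∈ Ecol n R)
      (h6 : dotProduct (a • colM M 0) (starCol M 1) = 0) :
      StarRels n R I ((FreeGroup.of (StarGen.F (colM M 0) (a • starCol M 1) h1 h2 h3) :
          FreeGroup (StarGen n R I)) *
        (FreeGroup.of (StarGen.S (a • colM M 0) (starCol M 1) h4 h5 h6))⁻¹)

/-- The group `St*(n, R, I)`. -/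
abbrev StStar (n : ℕ) (R : Type) [CommRing R] [NeZero n] (I : Ideal R) : Type :=
  PresentedGroup {w | StarRels n R I w}

section Helpers

variable {n : ℕ} {R : Type} [CommRing R]

theorem single_sq_zero {i j : Fin n} (h : i ≠ j) (a b : R) :
    (1 + Matrix.single i j a) * (1 + Matrix.single i j b) = 1 + Matrix.single i j (a + b) := by
  rw [mul_add, add_mul, add_mul, Matrix.single_mul_single_of_ne _ _ _ _ h.symm, Matrix.single_add]
  simp [add_assoc]

/-- Elementary transvection as an element of GL. -/
def tau (i j : Fin n) (h : i ≠ j) (r : R) : Matrix.GeneralLinearGroup (Fin n) R :=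
  ⟨1 + Matrix.single i j r, 1 + Matrix.single i j (-r),
    by rw [single_sq_zero h]; simp, by rw [single_sq_zero h]; simp⟩

theorem tau_mem (i j : Fin n) (h : i ≠ j) (r : R) : tau i j h r ∈ Elem n R :=
  Subgroup.subset_closure ⟨i, j, h, r, rfl⟩

theorem colM_tau (M : Matrix.GeneralLinearGroup (Fin n) R) (i j : Fin n) (h : i ≠ j) (r : R)
    (k : Fin n) : colM (M * tau i j h r) k =
      if k = j then colM M j + r • colM M i else colM M k := by
  have e : ((M * tau i j h r : Matrix.GeneralLinearGroup (Fin n) R) : Matrix (Fin n) (Fin n) R)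
    = M.val * (1 + Matrix.single i j r) := rfl
  funext x
  simp only [colM]
  rw [e, mul_add, mul_one, Matrix.add_apply]
  split_ifs with hk
  · subst hk; simp [mul_comm, colM]
  · rw [Matrix.mul_single_apply_of_ne _ _ _ _ _ hk]; simp [colM]

theorem starCol_tau (M : Matrix.GeneralLinearGroup (Fin n) R) (i j : Fin n) (h : i ≠ j) (r : R)
    (k : Fin n) : starCol (M * tau i j h r) k =
      if k = i then starCol M i - r • starCol M j else starCol M k := by
  have e : (((M * tau i j h r)⁻¹ : Matrix.GeneralLinearGroup (Fin n) R) :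
      Matrix (Fin n) (Fin n) R) = (1 + Matrix.single i j (-r)) * (M⁻¹).val := by
    rw [mul_inv_rev]; rfl
  funext x
  simp only [starCol]
  rw [e, add_mul, one_mul, Matrix.add_apply]
  split_ifs with hk
  · subst hk; simp [starCol, sub_eq_add_neg]
  · rw [Matrix.single_mul_apply_of_ne _ _ _ _ _ hk]; simp [starCol]

theorem exists_contra_aux (M : Matrix.GeneralLinearGroup (Fin n) R) (hM : M ∈ Elem n R) :
    ∃ N ∈ Elem n R, N.val = (M⁻¹).val.transpose ∧ (N⁻¹).val = M.val.transpose := by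
  induction hM using Subgroup.closure_induction with
  | mem M h =>
    obtain ⟨i, j, hij, r, h⟩ := h
    have : M = tau i j hij r := Units.ext h
    subst this
    refine ⟨tau j i hij.symm (-r), tau_mem _ _ _ _, ?_, ?_⟩
    · change 1 + Matrix.single j i (-r) = (1 + Matrix.single i j (-r)).transpose
      simp
    · change 1 + Matrix.single j i (- -r) = (1 + Matrix.single i j r).transpose
      simp
  | one => exact ⟨1, one_mem _, by simp, by simp⟩
  | mul A B _ _ ha hb =>
    obtain ⟨A', hA, h1, h2⟩ := ha
    obtain ⟨B', hB, h3, h4⟩ := hb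
    refine ⟨A' * B', mul_mem hA hB, ?_, ?_⟩
    · rw [mul_inv_rev, Units.val_mul, Units.val_mul, h1, h3, Matrix.transpose_mul]
    · rw [mul_inv_rev, Units.val_mul, Units.val_mul, h2, h4, Matrix.transpose_mul]
  | inv A _ ha =>
    obtain ⟨A', hA, h1, h2⟩ := ha
    exact ⟨A'⁻¹, inv_mem hA, by rw [h2, inv_inv], by rw [inv_inv, h1]⟩

theorem exists_contra (M : Matrix.GeneralLinearGroup (Fin n) R) (hM : M ∈ Elem n R) :
    ∃ N ∈ Elem n R, (∀ k, colM N k = starCol M k) ∧ (∀ k, starCol N k = colM M k) := by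
  obtain ⟨N, hN, h1, h2⟩ := exists_contra_aux M hM
  refine ⟨N, hN, fun k => ?_, fun k => ?_⟩
  · funext i; simp only [colM, starCol, h1]; rfl
  · funext i; simp only [colM, starCol, h2]; rfl

theorem exists_move (M : Matrix.GeneralLinearGroup (Fin n) R) (hM : M ∈ Elem n R)
    (z o k : Fin n) (hzo : z ≠ o) (hk : z ≠ k) :
    ∃ N ∈ Elem n R, colM N z = colM M z ∧ starCol N o = starCol M k := by
  by_cases h : o = k
  · subst h; exact ⟨M, hM, rfl, rfl⟩
  · refine ⟨M * tau o k h (-1) * tau k o (Ne.symm h) 1 * tau o k h (-1),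
      mul_mem (mul_mem (mul_mem hM (tau_mem _ _ _ _)) (tau_mem _ _ _ _)) (tau_mem _ _ _ _), ?_, ?_⟩
    · simp [colM_tau, hzo, hk]
    · simp [starCol_tau, h, Ne.symm h]

theorem exists_signed_swap (M : Matrix.GeneralLinearGroup (Fin n) R) (hM : M ∈ Elem n R)
    (z o : Fin n) (h : z ≠ o) :
    ∃ N ∈ Elem n R, colM N z = - colM M o ∧ starCol N o = starCol M z := by
  refine ⟨M * tau o z h.symm (-1) * tau z o h 1 * tau o z h.symm (-1),
      mul_mem (mul_mem (mul_mem hM (tau_mem _ _ _ _)) (tau_mem _ _ _ _)) (tau_mem _ _ _ _), ?_, ?_⟩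
  · simp [colM_tau, h, h.symm]
  · simp [starCol_tau, h, h.symm]

theorem dot_col_star (M : Matrix.GeneralLinearGroup (Fin n) R) (i j : Fin n) (h : i ≠ j) :
    dotProduct (colM M i) (starCol M j) = 0 := by
  have : ((M⁻¹).val * M.val) j i = 0 := by
    rw [← Units.val_mul, inv_mul_cancel]; simp [h.symm]
  rw [dotProduct_comm]
  exact this

theorem decomp (M : Matrix.GeneralLinearGroup (Fin n) R) (v : Fin n → R) :
    v = ∑ k, dotProduct (colM M k) v • starCol M k := by
  have h : (M.val * (M⁻¹).val).transpose.mulVec v = v := by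
    rw [← Units.val_mul, mul_inv_cancel]; simp
  rw [Matrix.transpose_mul, ← Matrix.mulVec_mulVec] at h
  conv_lhs => rw [← h]
  funext i
  rw [Finset.sum_apply]
  change ∑ k : Fin n, _ = _
  apply Finset.sum_congr rfl
  intro k _
  simp [starCol, Matrix.mulVec, colM, dotProduct, mul_comm]

theorem dot_mem {I : Ideal R} (u v : Fin n → R) (hv : ∀ i, v i ∈ I) : dotProduct u v ∈ I :=
  Ideal.sum_mem _ fun i _ => I.mul_mem_left _ (hv i)

end Helpers

theorem stmt9 (n : ℕ) (hn : 4 ≤ n) [NeZero n] (R : Type) [CommRing R] (I : Ideal R) :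
    Subgroup.closure
      {g : StStar n R I | ∃ (M : Matrix.GeneralLinearGroup (Fin n) R) (_ : M ∈ Elem n R)
        (a : R) (_ : a ∈ I) (h1 : colM M 0 ∈ Ecol n R) (h2 : ∀ i, (a • starCol M 1) i ∈ I)
        (h3 : dotProduct (colM M 0) (a • starCol M 1) = 0),
        g = PresentedGroup.of (StarGen.F (colM M 0) (a • starCol M 1) h1 h2 h3)} = ⊤ := by
  have h01 : (0 : Fin n) ≠ 1 := by
    intro h
    have := congrArg Fin.val h
    rw [Fin.val_one', Nat.mod_eq_of_lt (by omega)] at this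
    simp at this
  set G := _
  change Subgroup.closure G = ⊤
  have key : ∀ (M : Matrix.GeneralLinearGroup (Fin n) R), M ∈ Elem n R → ∀ a ∈ I, ∀ k, 0 ≠ k →
      ∀ hu hv ho, (PresentedGroup.of (StarGen.F (colM M 0) (a • starCol M k) hu hv ho) :
        StStar n R I) ∈ Subgroup.closure G := by
    intro M hM a ha k hk
    obtain ⟨N, hN, h1, h2⟩ := exists_move M hM 0 1 k h01 hk
    rw [← h1, ← h2]
    intro hu hv ho
    exact Subgroup.subset_closure ⟨N, hN, a, ha, hu, hv, ho, rfl⟩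
  have keyS : ∀ (M : Matrix.GeneralLinearGroup (Fin n) R), M ∈ Elem n R → ∀ a ∈ I, ∀ k, 0 ≠ k →
      ∀ hu hv ho, (PresentedGroup.of (StarGen.S (a • starCol M k) (colM M 0) hu hv ho) :
        StStar n R I) ∈ Subgroup.closure G := by
    intro M hM a ha k hk
    obtain ⟨M1, hM1, h1, h2⟩ := exists_move M hM 0 1 k h01 hk
    obtain ⟨M2, hM2, h3, h4⟩ := exists_contra M1 hM1
    obtain ⟨N, hN, h5, h6⟩ := exists_signed_swap M2 hM2 0 1 h01
    rw [h3, h2] at h5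
    rw [h4, h1] at h6
    have e : a • starCol M k = (-a) • colM N 0 := by rw [h5]; simp
    rw [e, ← h6]
    intro hu hv ho
    have c1 : colM N 0 ∈ Ecol n R := ⟨N, hN, rfl⟩
    have c2 : ∀ i, ((-a) • starCol N 1) i ∈ I := fun i =>
      I.mul_mem_right _ (I.neg_mem ha)
    have c3 : dotProduct (colM N 0) ((-a) • starCol N 1) = 0 := by
      rw [dotProduct_smul, dot_col_star N 0 1 h01, smul_zero]
    have r := PresentedGroup.one_of_mem (rels := {w | StarRels n R I w})
      (StarRels.coinc N hN (-a) (I.neg_mem ha) c1 c2 c3 hu hv ho)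
    rw [map_mul, map_inv, mul_inv_eq_one] at r
    have r' : (PresentedGroup.of (StarGen.F (colM N 0) ((-a) • starCol N 1) c1 c2 c3) :
        StStar n R I) = PresentedGroup.of (StarGen.S ((-a) • colM N 0) (starCol N 1) hu hv ho) := r
    rw [← r']
    exact Subgroup.subset_closure ⟨N, hN, -a, I.neg_mem ha, c1, c2, c3, rfl⟩
  have addF : ∀ (u v w : Fin n → R) (hu : u ∈ Ecol n R) (hv : ∀ i, v i ∈ I) (hw : ∀ i, w i ∈ I)
      (hvw : ∀ i, (v + w) i ∈ I) (o1 : dotProduct u v = 0)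
      (o2 : dotProduct u w = 0) (o3 : dotProduct u (v + w) = 0),
      (PresentedGroup.of (StarGen.F u v hu hv o1) : StStar n R I) *
        PresentedGroup.of (StarGen.F u w hu hw o2) =
          PresentedGroup.of (StarGen.F u (v + w) hu hvw o3) := by
    intro u v w hu hv hw hvw o1 o2 o3
    have r := PresentedGroup.one_of_mem (rels := {w | StarRels n R I w})
      (StarRels.addF u v w hu hv hw hvw o1 o2 o3)
    rw [map_mul, map_mul, map_inv, mul_inv_eq_one] at r
    exact r
  have addS : ∀ (v u w : Fin n → R) (hv : v ∈ Ecol n R) (hu : ∀ i, u i ∈ I) (hw : ∀ i, w i ∈ I)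
      (huw : ∀ i, (u + w) i ∈ I) (o1 : dotProduct u v = 0)
      (o2 : dotProduct w v = 0) (o3 : dotProduct (u + w) v = 0),
      (PresentedGroup.of (StarGen.S u v hu hv o1) : StStar n R I) *
        PresentedGroup.of (StarGen.S w v hw hv o2) =
          PresentedGroup.of (StarGen.S (u + w) v huw hv o3) := by
    intro v u w hv hu hw huw o1 o2 o3
    have r := PresentedGroup.one_of_mem (rels := {w | StarRels n R I w})
      (StarRels.addS u w v hu hw huw hv o1 o2 o3)
    rw [map_mul, map_mul, map_inv, mul_inv_eq_one] at r
    exact r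
  have hF : ∀ (u v : Fin n → R) hu hv ho,
      (PresentedGroup.of (StarGen.F u v hu hv ho) : StStar n R I) ∈ Subgroup.closure G := by
    intro u v hu hv ho
    obtain ⟨M, hM, rfl⟩ := id hu
    change dotProduct (colM M 0) v = 0 at ho
    suffices H : (∀ i, v i ∈ I) ∧ dotProduct (colM M 0) v = 0 ∧ ∀ hu hv ho,
        (PresentedGroup.of (StarGen.F (colM M 0) v hu hv ho) : StStar n R I) ∈
          Subgroup.closure G from H.2.2 hu hv ho
    have hz : (∀ i, (0 : Fin n → R) i ∈ I) ∧ dotProduct (colM M 0) (0 : Fin n → R) = 0 ∧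
        ∀ hu hv ho, (PresentedGroup.of (StarGen.F (colM M 0) 0 hu hv ho) : StStar n R I) ∈
          Subgroup.closure G := by
      refine ⟨by simp, by simp, ?_⟩
      have := key M hM 0 I.zero_mem 1 h01
      rwa [zero_smul] at this
    rw [decomp M v]
    refine Finset.sum_induction _ (fun v => (∀ i, v i ∈ I) ∧ dotProduct (colM M 0) v = 0 ∧
      ∀ hu hv ho, (PresentedGroup.of (StarGen.F (colM M 0) v hu hv ho) : StStar n R I) ∈
          Subgroup.closure G) ?_ hz ?_
    · rintro a b ⟨a1, a2, a3⟩ ⟨b1, b2, b3⟩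
      refine ⟨fun i => I.add_mem (a1 i) (b1 i), by rw [dotProduct_add, a2, b2, add_zero], ?_⟩
      intro hu hv ho
      rw [← addF _ a b hu a1 b1 hv a2 b2 ho]
      exact mul_mem (a3 _ _ _) (b3 _ _ _)
    · intro k _
      by_cases hk : 0 = k
      · subst hk
        rw [ho, zero_smul]
        exact hz
      · have hI := dot_mem (I := I) (colM M k) v hv
        exact ⟨fun i => I.mul_mem_right _ hI,
          by rw [dotProduct_smul, dot_col_star M 0 k hk, smul_zero], key M hM _ hI k hk⟩
  have hS : ∀ (u v : Fin n → R) hu hv ho,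
      (PresentedGroup.of (StarGen.S u v hu hv ho) : StStar n R I) ∈ Subgroup.closure G := by
    intro v u hv hu ho
    obtain ⟨M, hM, rfl⟩ := id hu
    change dotProduct v (colM M 0) = 0 at ho
    suffices H : (∀ i, v i ∈ I) ∧ dotProduct v (colM M 0) = 0 ∧ ∀ hv hu ho,
        (PresentedGroup.of (StarGen.S v (colM M 0) hv hu ho) : StStar n R I) ∈
          Subgroup.closure G from H.2.2 hv hu ho
    have hz : (∀ i, (0 : Fin n → R) i ∈ I) ∧ dotProduct (0 : Fin n → R) (colM M 0) = 0 ∧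
        ∀ hv hu ho, (PresentedGroup.of (StarGen.S 0 (colM M 0) hv hu ho) : StStar n R I) ∈
          Subgroup.closure G := by
      refine ⟨by simp, by simp, ?_⟩
      have := keyS M hM 0 I.zero_mem 1 h01
      rwa [zero_smul] at this
    rw [decomp M v]
    refine Finset.sum_induction _ (fun v => (∀ i, v i ∈ I) ∧ dotProduct v (colM M 0) = 0 ∧
      ∀ hv hu ho, (PresentedGroup.of (StarGen.S v (colM M 0) hv hu ho) : StStar n R I) ∈
          Subgroup.closure G) ?_ hz ?_
    · rintro a b ⟨a1, a2, a3⟩ ⟨b1, b2, b3⟩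
      refine ⟨fun i => I.add_mem (a1 i) (b1 i), by rw [add_dotProduct, a2, b2, add_zero], ?_⟩
      intro hv hu ho
      rw [← addS _ a b hu a1 b1 hv a2 b2 ho]
      exact mul_mem (a3 _ _ _) (b3 _ _ _)
    · intro k _
      by_cases hk : 0 = k
      · subst hk
        rw [dotProduct_comm, ho, zero_smul]
        exact hz
      · have hI := dot_mem (I := I) (colM M k) v hv
        exact ⟨fun i => I.mul_mem_right _ hI,
          by rw [smul_dotProduct, dotProduct_comm (starCol M k), dot_col_star M 0 k hk, smul_zero],
          keyS M hM _ hI k hk⟩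
  rw [eq_top_iff, ← PresentedGroup.closure_range_of, Subgroup.closure_le]
  rintro _ ⟨x, rfl⟩
  cases x with
  | F u v hu hv ho => exact hF u v hu hv ho
  | S u v hu hv ho => exact hS u v hu hv ho
end

section
/- Let R be a commutative ring, I an ideal of R, and n ≥ 4. Let φ : St*(n,R,I) → GL(n,R) be the natural homomorphism sending F(u,v) ↦ t(u,v) and S(u,v) ↦ t(u,v). Then for every g ∈ St*(n,R,I) and every generator F(u,v), one has g·F(u,v)·g⁻¹ = F(φ(g)·u, (φ(g)⁻¹)ᵗ·v). -/
section StarHelpers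
open Matrix

variable {n : ℕ} [NeZero n] {R : Type} [CommRing R] {I : Ideal R}

/-- elementary transvection as a unit -/
def tvGL (i j : Fin n) (h : i ≠ j) (r : R) : GeneralLinearGroup (Fin n) R where
  val := 1 + Matrix.single i j r
  inv := 1 + Matrix.single i j (-r)
  val_inv := Matrix.transvection_mul_transvection_same i j h r (-r) |>.trans (by simp)
  inv_val := Matrix.transvection_mul_transvection_same i j h (-r) r |>.trans (by simp)

lemma tvGL_mem (i j : Fin n) (h : i ≠ j) (r : R) : tvGL i j h r ∈ Elem n R :=
  Subgroup.subset_closure ⟨i, j, h, r, rfl⟩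

lemma elem_transpose (N : GeneralLinearGroup (Fin n) R) (hN : N ∈ Elem n R) :
    ∃ N' ∈ Elem n R, (N' : Matrix (Fin n) (Fin n) R) = (N : Matrix (Fin n) (Fin n) R)ᵀ := by
  induction hN using Subgroup.closure_induction with
  | mem x hx =>
    obtain ⟨i, j, h, r, hx⟩ := hx
    refine ⟨tvGL j i h.symm r, tvGL_mem _ _ _ _, ?_⟩
    rw [hx]
    simp [tvGL]
  | one => exact ⟨1, one_mem _, by simp⟩
  | mul x y _ _ hx hy =>
    obtain ⟨x', hx', hx⟩ := hx
    obtain ⟨y', hy', hy⟩ := hy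
    refine ⟨y' * x', mul_mem hy' hx', ?_⟩
    simp [hx, hy]
  | inv x _ hx =>
    obtain ⟨x', hx', hx⟩ := hx
    refine ⟨x'⁻¹, inv_mem hx', ?_⟩
    rw [Matrix.coe_units_inv, Matrix.coe_units_inv, hx, Matrix.transpose_nonsing_inv]

lemma elem_mulVec_Ecol (N : GeneralLinearGroup (Fin n) R) (hN : N ∈ Elem n R)
    (u : Fin n → R) (hu : u ∈ Ecol n R) :
    (N : Matrix (Fin n) (Fin n) R) *ᵥ u ∈ Ecol n R := by
  obtain ⟨M, hM, rfl⟩ := hu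
  refine ⟨N * M, mul_mem hN hM, ?_⟩
  ext i
  simp [Matrix.mulVec, dotProduct, Matrix.mul_apply]

lemma row_elem (v : Fin n → R) (s : Finset (Fin n)) (hs : (0 : Fin n) ∉ s) :
    ∃ T ∈ Elem n R, (T : Matrix (Fin n) (Fin n) R) = 1 + ∑ j ∈ s, Matrix.single 0 j (v j) := by
  induction s using Finset.induction_on with
  | empty => exact ⟨1, one_mem _, by simp⟩
  | insert a s ha ih =>
    have h0 : (0 : Fin n) ≠ a := fun h => hs (by simp [h])
    have h0s : (0 : Fin n) ∉ s := fun h => hs (by simp [h])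
    obtain ⟨T, hT, hTe⟩ := ih h0s
    refine ⟨tvGL 0 a h0 (v a) * T, mul_mem (tvGL_mem _ _ _ _) hT, ?_⟩
    rw [Finset.sum_insert ha, Units.val_mul, hTe]
    have : Matrix.single (0 : Fin n) a (v a) * ∑ j ∈ s, Matrix.single 0 j (v j) = 0 := by
      rw [Finset.mul_sum]
      exact Finset.sum_eq_zero fun j _ => by simp [h0.symm]
    simp only [tvGL, add_mul, mul_add, one_mul, mul_one, this]
    abel

lemma tMat_elem (u v : Fin n → R) (hu : u ∈ Ecol n R) (ho : dotProduct u v = 0) :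
    ∃ T ∈ Elem n R, (T : Matrix (Fin n) (Fin n) R) = tMat u v := by
  obtain ⟨N, hN, rfl⟩ := hu
  set v' : Fin n → R := v ᵥ* (N : Matrix (Fin n) (Fin n) R) with hv'
  have h0 : v' 0 = 0 := by
    rw [hv', ← ho, dotProduct_comm]; rfl
  obtain ⟨T, hT, hTe⟩ := row_elem v' (Finset.univ.erase 0) (by simp)
  refine ⟨N * T * N⁻¹, mul_mem (mul_mem hN hT) (inv_mem hN), ?_⟩
  have h1 : ∑ j ∈ Finset.univ.erase (0 : Fin n), Matrix.single (0 : Fin n) j (v' j)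
      = vecMulVec (Pi.single (0 : Fin n) 1) v' := by
    rw [Finset.sum_erase _ (by rw [h0]; simp)]
    ext i j
    rw [Matrix.sum_apply]
    by_cases hi : i = 0
    · subst hi
      simp [Matrix.single_apply, vecMulVec_apply]
    · simp [Matrix.single_apply, vecMulVec_apply, hi, Ne.symm hi]
  have h2 : v' ᵥ* ((N⁻¹ : GeneralLinearGroup (Fin n) R) : Matrix (Fin n) (Fin n) R) = v := by
    rw [hv', Matrix.vecMul_vecMul, ← Units.val_mul, mul_inv_cancel]; simp
  rw [Units.val_mul, Units.val_mul, hTe, h1, mul_add, add_mul, mul_one, ← Units.val_mul,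
    mul_inv_cancel, Matrix.mul_vecMulVec, Matrix.vecMulVec_mul, h2, tMat]
  congr 2
  ext i
  simp

/-- generator -/
def gF (u v : Fin n → R) (hu : u ∈ Ecol n R) (hv : ∀ i, v i ∈ I)
    (ho : dotProduct u v = 0) : StStar n R I := PresentedGroup.of (StarGen.F u v hu hv ho)

/-- generator -/
def gS (u v : Fin n → R) (hu : ∀ i, u i ∈ I) (hv : v ∈ Ecol n R)
    (ho : dotProduct u v = 0) : StStar n R I := PresentedGroup.of (StarGen.S u v hu hv ho)

lemma gF_add (u v w : Fin n → R) (hu : u ∈ Ecol n R) (hv : ∀ i, v i ∈ I) (hw : ∀ i, w i ∈ I)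
      (hvw : ∀ i, (v + w) i ∈ I) (o1 : dotProduct u v = 0)
      (o2 : dotProduct u w = 0) (o3 : dotProduct u (v + w) = 0) :
    gF u v hu hv o1 * gF u w hu hw o2 = gF u (v + w) hu hvw o3 :=
  mul_inv_eq_one.1 (PresentedGroup.one_of_mem (StarRels.addF u v w hu hv hw hvw o1 o2 o3))

lemma gS_add (u w v : Fin n → R) (hu : ∀ i, u i ∈ I) (hw : ∀ i, w i ∈ I)
      (huw : ∀ i, (u + w) i ∈ I) (hv : v ∈ Ecol n R) (o1 : dotProduct u v = 0)
      (o2 : dotProduct w v = 0) (o3 : dotProduct (u + w) v = 0) :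
    gS u v hu hv o1 * gS w v hw hv o2 = gS (u + w) v huw hv o3 :=
  mul_inv_eq_one.1 (PresentedGroup.one_of_mem (StarRels.addS u w v hu hw huw hv o1 o2 o3))

lemma gF_zero (u v : Fin n → R) (hu : u ∈ Ecol n R) (hv : ∀ i, v i ∈ I)
    (ho : dotProduct u v = 0) (h : v = 0) : (gF u v hu hv ho : StStar n R I) = 1 := by
  subst h
  have := gF_add (I := I) u 0 0 hu hv hv (by simp) ho ho (by simp)
  simp only [add_zero] at this
  exact mul_eq_left.1 this

lemma gS_zero (u v : Fin n → R) (hu : ∀ i, u i ∈ I) (hv : v ∈ Ecol n R)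
    (ho : dotProduct u v = 0) (h : u = 0) : (gS u v hu hv ho : StStar n R I) = 1 := by
  subst h
  have := gS_add (I := I) 0 0 v hu hu (by simp) hv ho ho (by simp)
  simp only [add_zero] at this
  exact mul_eq_left.1 this

lemma gF_inv (u v : Fin n → R) (hu : u ∈ Ecol n R) (hv : ∀ i, v i ∈ I)
    (ho : dotProduct u v = 0) : (gF u v hu hv ho : StStar n R I)⁻¹ =
      gF u (-v) hu (fun i => neg_mem (hv i)) (by simp [ho]) := by
  symm
  apply eq_inv_of_mul_eq_one_right
  rw [gF_add (I := I) u v (-v) hu hv (fun i => neg_mem (hv i)) (by simp) ho (by simp [ho]) (by simp)]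
  exact gF_zero _ _ _ _ _ (by simp)

lemma gS_inv (u v : Fin n → R) (hu : ∀ i, u i ∈ I) (hv : v ∈ Ecol n R)
    (ho : dotProduct u v = 0) : (gS u v hu hv ho : StStar n R I)⁻¹ =
      gS (-u) v (fun i => neg_mem (hu i)) hv (by simp [ho]) := by
  symm
  apply eq_inv_of_mul_eq_one_right
  rw [gS_add (I := I) u (-u) v hu (fun i => neg_mem (hu i)) (by simp) hv ho (by simp [ho]) (by simp)]
  exact gS_zero _ _ _ _ _ (by simp)

lemma gF_congr {u v u' v' : Fin n → R} (hu : u ∈ Ecol n R) (hv : ∀ i, v i ∈ I)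
    (ho : dotProduct u v = 0) (hu' : u' ∈ Ecol n R) (hv' : ∀ i, v' i ∈ I)
    (ho' : dotProduct u' v' = 0) (e : u = u') (f : v = v') :
    (gF u v hu hv ho : StStar n R I) = gF u' v' hu' hv' ho' := by
  subst e; subst f; rfl

/-- the conjugation property -/
def Good (φ : StStar n R I →* GeneralLinearGroup (Fin n) R) (g : StStar n R I) : Prop :=
  ∀ (u v : Fin n → R) (hu : u ∈ Ecol n R) (hv : ∀ i, v i ∈ I) (ho : dotProduct u v = 0),
    ∃ (hu' : (φ g : Matrix (Fin n) (Fin n) R) *ᵥ u ∈ Ecol n R)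
      (hv' : ∀ i, ((((φ g)⁻¹ : GeneralLinearGroup (Fin n) R) :
        Matrix (Fin n) (Fin n) R)ᵀ *ᵥ v) i ∈ I)
      (ho' : dotProduct ((φ g : Matrix (Fin n) (Fin n) R) *ᵥ u)
        ((((φ g)⁻¹ : GeneralLinearGroup (Fin n) R) : Matrix (Fin n) (Fin n) R)ᵀ *ᵥ v) = 0),
      g * gF u v hu hv ho * g⁻¹ = gF _ _ hu' hv' ho'

lemma good_one (φ : StStar n R I →* GeneralLinearGroup (Fin n) R) : Good φ 1 := by
  intro u v hu hv ho
  refine ⟨by simpa using hu, by simpa using hv, by simpa using ho, ?_⟩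
  rw [one_mul, inv_one, mul_one]
  exact gF_congr _ _ _ _ _ _ (by simp) (by simp)

lemma good_mul (φ : StStar n R I →* GeneralLinearGroup (Fin n) R) {g h : StStar n R I}
    (hg : Good φ g) (hh : Good φ h) : Good φ (g * h) := by
  intro u v hu hv ho
  obtain ⟨a1, a2, a3, a4⟩ := hh u v hu hv ho
  obtain ⟨b1, b2, b3, b4⟩ := hg _ _ a1 a2 a3
  have e1 : (φ (g * h) : Matrix (Fin n) (Fin n) R) *ᵥ u =
      (φ g : Matrix (Fin n) (Fin n) R) *ᵥ ((φ h : Matrix (Fin n) (Fin n) R) *ᵥ u) := by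
    rw [map_mul, Units.val_mul, Matrix.mulVec_mulVec]
  have e2 : (((φ (g * h))⁻¹ : GeneralLinearGroup (Fin n) R) : Matrix (Fin n) (Fin n) R)ᵀ *ᵥ v =
      (((φ g)⁻¹ : GeneralLinearGroup (Fin n) R) : Matrix (Fin n) (Fin n) R)ᵀ *ᵥ
      ((((φ h)⁻¹ : GeneralLinearGroup (Fin n) R) : Matrix (Fin n) (Fin n) R)ᵀ *ᵥ v) := by
    rw [map_mul, _root_.mul_inv_rev, Units.val_mul, Matrix.mulVec_mulVec, Matrix.transpose_mul]
  refine ⟨e1 ▸ b1, e2 ▸ b2, by rw [e1, e2]; exact b3, ?_⟩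
  have : g * h * gF u v hu hv ho * (g * h)⁻¹ = g * (h * gF u v hu hv ho * h⁻¹) * g⁻¹ := by
    group
  rw [this, a4, b4]
  exact gF_congr _ _ _ _ _ _ e1.symm e2.symm

lemma good_F (φ : StStar n R I →* GeneralLinearGroup (Fin n) R)
    (hφF : ∀ (u v : Fin n → R) (hu : u ∈ Ecol n R) (hv : ∀ i, v i ∈ I)
      (ho : dotProduct u v = 0),
      (φ (gF u v hu hv ho) : Matrix (Fin n) (Fin n) R) = tMat u v)
    (u v : Fin n → R) (hu : u ∈ Ecol n R) (hv : ∀ i, v i ∈ I)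
    (ho : dotProduct u v = 0) : Good φ (gF u v hu hv ho) := by
  intro u' v' hu' hv' ho'
  have e1 := hφF u v hu hv ho
  have e2 : (((φ (gF u v hu hv ho))⁻¹ : GeneralLinearGroup (Fin n) R) :
      Matrix (Fin n) (Fin n) R)ᵀ = 1 - Matrix.vecMulVec v u := by
    rw [← map_inv, gF_inv, hφF, tMat]
    simp [Matrix.vecMulVec_neg, Matrix.transpose_vecMulVec, sub_eq_add_neg]
  have h1 : tMat u v *ᵥ u' ∈ Ecol n R := by
    obtain ⟨T, hT, e⟩ := tMat_elem u v hu ho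
    rw [← e]
    exact elem_mulVec_Ecol T hT u' hu'
  have h2 : ∀ i, ((1 - Matrix.vecMulVec v u) *ᵥ v') i ∈ I := by
    intro i
    rw [Matrix.sub_mulVec, Matrix.one_mulVec, Matrix.vecMulVec_mulVec]
    simp only [Pi.sub_apply, Pi.smul_apply]
    exact sub_mem (hv' i) (by simpa using I.mul_mem_right _ (hv i))
  have h3 : dotProduct (tMat u v *ᵥ u') ((1 - Matrix.vecMulVec v u) *ᵥ v') = 0 := by
    rw [tMat, Matrix.sub_mulVec, Matrix.add_mulVec, Matrix.one_mulVec, Matrix.one_mulVec,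
      Matrix.vecMulVec_mulVec, Matrix.vecMulVec_mulVec]
    simp only [op_smul_eq_smul, dotProduct_sub, add_dotProduct, smul_dotProduct, dotProduct_smul,
      ho, ho', smul_eq_mul]
    rw [dotProduct_comm u' v]
    ring
  refine ⟨e1.symm ▸ h1, e2.symm ▸ h2, by rw [e1, e2]; exact h3, ?_⟩
  have hr : gF u v hu hv ho * gF u' v' hu' hv' ho' * (gF u v hu hv ho)⁻¹ *
      (gF (I := I) _ _ h1 h2 h3)⁻¹ = 1 := PresentedGroup.one_of_mem
    (StarRels.conjF u v u' v' hu hv ho hu' hv' ho' h1 h2 h3)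
  rw [mul_inv_eq_one.1 hr]
  exact gF_congr _ _ _ _ _ _ (by rw [e1]) (by rw [e2])

/-- auxiliary property of `w` -/
def QS (φ : StStar n R I →* GeneralLinearGroup (Fin n) R) (z : Fin n → R) (w : Fin n → R) : Prop :=
  ∃ (hw : ∀ i, w i ∈ I) (hz : z ∈ Ecol n R) (ho : dotProduct w z = 0), Good φ (gS w z hw hz ho)

lemma QS_add (φ : StStar n R I →* GeneralLinearGroup (Fin n) R) (z w w' : Fin n → R)
    (h : QS φ z w) (h' : QS φ z w') : QS φ z (w + w') := by
  obtain ⟨a, b, c, d⟩ := h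
  obtain ⟨a', b', c', d'⟩ := h'
  refine ⟨fun i => add_mem (a i) (a' i), b, by rw [add_dotProduct, c, c', add_zero], ?_⟩
  rw [← gS_add w w' z a a' _ b c c']
  exact good_mul φ d d'

lemma QS_zero (φ : StStar n R I →* GeneralLinearGroup (Fin n) R) (z : Fin n → R)
    (hz : z ∈ Ecol n R) : QS φ z 0 := by
  refine ⟨by simp, hz, by simp, ?_⟩
  rw [gS_zero _ _ _ _ _ rfl]
  exact good_one φ

lemma starCol_dot (M : GeneralLinearGroup (Fin n) R) (i j : Fin n) :
    dotProduct (starCol M i) (colM M j) = (1 : Matrix (Fin n) (Fin n) R) i j := by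
  rw [← Units.val_one, ← inv_mul_cancel M]; rfl

lemma QS_col (φ : StStar n R I →* GeneralLinearGroup (Fin n) R)
    (hφF : ∀ (u v : Fin n → R) (hu : u ∈ Ecol n R) (hv : ∀ i, v i ∈ I)
      (ho : dotProduct u v = 0),
      (φ (gF u v hu hv ho) : Matrix (Fin n) (Fin n) R) = tMat u v)
    (h01 : (1 : Fin n) ≠ 0)
    (M : GeneralLinearGroup (Fin n) R) (hM : M ∈ Elem n R) (a : R) (ha : a ∈ I)
    (hz : starCol M 1 ∈ Ecol n R) : QS φ (starCol M 1) (a • colM M 0) := by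
  have o : dotProduct (colM M 0) (starCol M 1) = 0 := by
    rw [dotProduct_comm, starCol_dot, Matrix.one_apply_ne h01]
  have h4 : ∀ i, (a • colM M 0) i ∈ I := fun i => by simpa using I.mul_mem_right _ ha
  have h6 : dotProduct (a • colM M 0) (starCol M 1) = 0 := by simp [o]
  refine ⟨h4, hz, h6, ?_⟩
  have h1 : colM M 0 ∈ Ecol n R := ⟨M, hM, rfl⟩
  have h2 : ∀ i, (a • starCol M 1) i ∈ I := fun i => by simpa using I.mul_mem_right _ ha
  have h3 : dotProduct (colM M 0) (a • starCol M 1) = 0 := by simp [o]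
  have hr : gF (I := I) _ _ h1 h2 h3 * (gS (I := I) _ _ h4 hz h6)⁻¹ = 1 :=
    PresentedGroup.one_of_mem (StarRels.coinc (I := I) M hM a ha h1 h2 h3 h4 hz h6)
  have e : gS (I := I) (a • colM M 0) (starCol M 1) h4 hz h6 = gF _ _ h1 h2 h3 :=
    (mul_inv_eq_one.1 hr).symm
  rw [e]
  exact good_F φ hφF _ _ _ _ _

lemma exists_star (h01 : (1 : Fin n) ≠ 0) (z : Fin n → R) (hz : z ∈ Ecol n R) :
    ∃ M ∈ Elem n R, starCol M 1 = z := by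
  obtain ⟨N, hN, rfl⟩ := hz
  obtain ⟨N', hN', e⟩ := elem_transpose N hN
  refine ⟨(tvGL 1 0 h01 1 * tvGL 0 1 h01.symm (-1) * N')⁻¹,
    inv_mem (mul_mem (mul_mem (tvGL_mem _ _ _ _) (tvGL_mem _ _ _ _)) hN'), ?_⟩
  have h : ∀ j, ((1 + Matrix.single 1 0 1) * (1 + Matrix.single 0 1 (-1)) :
      Matrix (Fin n) (Fin n) R) 1 j = (1 : Matrix (Fin n) (Fin n) R) 0 j := by
    intro j
    simp only [add_mul, mul_add, one_mul, mul_one, Matrix.single_mul_single_same, Matrix.add_apply,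
      Matrix.single_apply, Matrix.one_apply, h01, h01.symm]
    by_cases h1 : 1 = j <;> by_cases h0 : 0 = j <;> simp [h1, h0]
  ext i
  rw [starCol, inv_inv, Units.val_mul, Units.val_mul, e, Matrix.mul_apply]
  simp only [tvGL, h]
  rw [← Matrix.mul_apply, one_mul, Matrix.transpose_apply]

lemma good_S (φ : StStar n R I →* GeneralLinearGroup (Fin n) R)
    (hφF : ∀ (u v : Fin n → R) (hu : u ∈ Ecol n R) (hv : ∀ i, v i ∈ I)
      (ho : dotProduct u v = 0),
      (φ (gF u v hu hv ho) : Matrix (Fin n) (Fin n) R) = tMat u v)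
    (h01 : (1 : Fin n) ≠ 0)
    (w z : Fin n → R) (hw : ∀ i, w i ∈ I) (hz : z ∈ Ecol n R)
    (ho : dotProduct w z = 0) : Good φ (gS w z hw hz ho) := by
  obtain ⟨M, hM, rfl⟩ := exists_star h01 z hz
  have key : ∀ (k : Fin n) (a : R), a ∈ I → k ≠ 1 → QS φ (starCol M 1) (a • colM M k) := by
    intro k a ha hk
    by_cases h0 : k = 0
    · subst h0; exact QS_col φ hφF h01 M hM a ha hz
    · have e1 : starCol (M * tvGL k 0 h0 1) 1 = starCol M 1 := by
        ext i
        simp only [starCol, _root_.mul_inv_rev, Units.val_mul]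
        change ((1 + Matrix.single k 0 (-1)) * _ : Matrix (Fin n) (Fin n) R) 1 i = _
        rw [add_mul, one_mul, Matrix.add_apply, Matrix.single_mul_apply_of_ne _ _ _ _ _ (Ne.symm hk),
          add_zero]
      have e2 : colM (M * tvGL k 0 h0 1) 0 = colM M 0 + colM M k := by
        ext i
        simp [colM, tvGL, mul_add]
      have h1 := QS_col φ hφF h01 (M * tvGL k 0 h0 1) (mul_mem hM (tvGL_mem _ _ _ _)) a ha
        (e1.symm ▸ hz)
      rw [e1, e2] at h1
      have h2 := QS_col φ hφF h01 M hM (-a) (neg_mem ha) hz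
      have h3 := QS_add φ _ _ _ h1 h2
      convert h3 using 1
      simp
  have hsum : w = ∑ k, dotProduct (starCol M k) w • colM M k := by
    have : (M : Matrix (Fin n) (Fin n) R) *ᵥ
        (((M⁻¹ : GeneralLinearGroup (Fin n) R) : Matrix (Fin n) (Fin n) R) *ᵥ w) = w := by
      rw [Matrix.mulVec_mulVec, ← Units.val_mul, mul_inv_cancel]; simp
    conv_lhs => rw [← this]
    ext i
    simp only [Finset.sum_apply, Pi.smul_apply, smul_eq_mul]
    change ∑ k, (M : Matrix (Fin n) (Fin n) R) i k * dotProduct (starCol M k) w = _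
    exact Finset.sum_congr rfl fun k _ => mul_comm
      ((M : Matrix (Fin n) (Fin n) R) i k) (dotProduct (starCol M k) w)
  have hQ : QS φ (starCol M 1) (∑ k, dotProduct (starCol M k) w • colM M k) := by
    apply Finset.sum_induction _ _ (QS_add φ _) (QS_zero φ _ hz)
    intro k _
    by_cases hk : k = 1
    · subst hk
      rw [dotProduct_comm, ho, zero_smul]
      exact QS_zero φ _ hz
    · exact key k _ (Ideal.sum_mem _ fun i _ => I.mul_mem_left _ (hw i)) hk
  rw [← hsum] at hQ
  exact hQ.2.2.2

end StarHelpers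

theorem stmt10 (n : ℕ) (hn : 4 ≤ n) [NeZero n] (R : Type) [CommRing R] (I : Ideal R)
    (φ : StStar n R I →* Matrix.GeneralLinearGroup (Fin n) R)
    (hφF : ∀ (u v : Fin n → R) (hu : u ∈ Ecol n R) (hv : ∀ i, v i ∈ I)
      (ho : dotProduct u v = 0),
      (φ (PresentedGroup.of (StarGen.F u v hu hv ho)) : Matrix (Fin n) (Fin n) R) = tMat u v)
    (hφS : ∀ (u v : Fin n → R) (hu : ∀ i, u i ∈ I) (hv : v ∈ Ecol n R)
      (ho : dotProduct u v = 0),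
      (φ (PresentedGroup.of (StarGen.S u v hu hv ho)) : Matrix (Fin n) (Fin n) R) = tMat u v) :
    ∀ (g : StStar n R I) (u v : Fin n → R) (hu : u ∈ Ecol n R) (hv : ∀ i, v i ∈ I)
      (ho : dotProduct u v = 0)
      (hu' : Matrix.mulVec (φ g : Matrix (Fin n) (Fin n) R) u ∈ Ecol n R)
      (hv' : ∀ i, Matrix.mulVec (Matrix.transpose (((φ g)⁻¹ : Matrix.GeneralLinearGroup (Fin n) R) :
        Matrix (Fin n) (Fin n) R)) v i ∈ I)
      (ho' : dotProduct (Matrix.mulVec (φ g : Matrix (Fin n) (Fin n) R) u)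
        (Matrix.mulVec (Matrix.transpose (((φ g)⁻¹ : Matrix.GeneralLinearGroup (Fin n) R) :
          Matrix (Fin n) (Fin n) R)) v) = 0),
      g * PresentedGroup.of (StarGen.F u v hu hv ho) * g⁻¹ =
        PresentedGroup.of (StarGen.F (Matrix.mulVec (φ g : Matrix (Fin n) (Fin n) R) u)
          (Matrix.mulVec (Matrix.transpose (((φ g)⁻¹ : Matrix.GeneralLinearGroup (Fin n) R) :
            Matrix (Fin n) (Fin n) R)) v) hu' hv' ho') := by
  have h01 : (1 : Fin n) ≠ 0 := by
    intro h
    have := congrArg Fin.val h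
    rw [Fin.val_one', Fin.val_zero, Nat.mod_eq_of_lt (by omega)] at this
    omega
  have hall : ∀ g : StStar n R I, Good φ g := by
    intro g
    obtain ⟨x, rfl⟩ := PresentedGroup.mk_surjective _ g
    induction x using FreeGroup.induction_on with
    | C1 => rw [map_one]; exact good_one φ
    | of x =>
      cases x with
      | F u v hu hv ho => exact good_F φ hφF u v hu hv ho
      | S u v hu hv ho => exact good_S φ hφF h01 u v hu hv ho
    | inv_of x _ =>
      rw [map_inv]
      cases x with
      | F u v hu hv ho =>
        have := good_F φ hφF u (-v) hu (fun i => neg_mem (hv i)) (by simp [ho])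
        rw [← gF_inv u v hu hv ho] at this
        exact this
      | S u v hu hv ho =>
        have := good_S φ hφF h01 (-u) v (fun i => neg_mem (hu i)) hv (by simp [ho])
        rw [← gS_inv u v hu hv ho] at this
        exact this
    | mul x y hx hy => rw [map_mul]; exact good_mul φ hx hy
  intro g u v hu hv ho hu' hv' ho'
  obtain ⟨_, _, _, h⟩ := hall g u v hu hv ho
  exact h
end

section
/- Let R be a commutative ring, I an ideal of R, and n ≥ 4. Let φ : St*(n,R,I) → GL(n,R) be the natural homomorphism sending F(u,v) ↦ t(u,v) and S(u,v) ↦ t(u,v). Then for every g ∈ St*(n,R,I) and every generator S(u,v), one has g·S(u,v)·g⁻¹ = S(φ(g)·u, (φ(g)⁻¹)ᵗ·v). -/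
namespace StAux
open Matrix

variable {n : ℕ} {R : Type} [CommRing R]

theorem zero_ne_one' [NeZero n] (hn : 4 ≤ n) : (0 : Fin n) ≠ 1 := by
  intro h
  have := congrArg Fin.val h
  rw [Fin.val_one', Nat.mod_eq_of_lt (by omega)] at this
  simp at this

/-- elementary transvection as an invertible matrix -/
def el (i j : Fin n) (h : i ≠ j) (r : R) : GeneralLinearGroup (Fin n) R where
  val := transvection i j r
  inv := transvection i j (-r)
  val_inv := by rw [transvection_mul_transvection_same _ _ h]; simp
  inv_val := by rw [transvection_mul_transvection_same _ _ h]; simp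

theorem el_mem (i j : Fin n) (h : i ≠ j) (r : R) : el i j h r ∈ Elem n R :=
  Subgroup.subset_closure ⟨i, j, h, r, rfl⟩

theorem exists_transpose {M : GeneralLinearGroup (Fin n) R} (hM : M ∈ Elem n R) :
    ∃ N ∈ Elem n R, (N : Matrix (Fin n) (Fin n) R) = (M : Matrix (Fin n) (Fin n) R)ᵀ := by
  induction hM using Subgroup.closure_induction with
  | mem x hx =>
    obtain ⟨i, j, h, r, hx⟩ := hx
    refine ⟨el j i h.symm r, el_mem _ _ _ _, ?_⟩
    rw [hx]
    simp [el, transvection]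
  | one => exact ⟨1, one_mem _, by simp⟩
  | mul x y hx hy ihx ihy =>
    obtain ⟨a, ha, ha'⟩ := ihx
    obtain ⟨b, hb, hb'⟩ := ihy
    exact ⟨b * a, mul_mem hb ha, by simp [ha', hb']⟩
  | inv x hx ih =>
    obtain ⟨a, ha, ha'⟩ := ih
    exact ⟨a⁻¹, inv_mem ha, by rw [coe_units_inv, coe_units_inv, ha', transpose_nonsing_inv]⟩

theorem colM_mul (g M : GeneralLinearGroup (Fin n) R) (k : Fin n) :
    colM (g * M) k = (g : Matrix (Fin n) (Fin n) R) *ᵥ colM M k := by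
  ext i
  simp [colM, Matrix.mul_apply, mulVec, dotProduct]

theorem starCol_mul (g M : GeneralLinearGroup (Fin n) R) (k : Fin n) :
    starCol (g * M) k =
      ((g⁻¹ : GeneralLinearGroup (Fin n) R) : Matrix (Fin n) (Fin n) R)ᵀ *ᵥ starCol M k := by
  ext i
  simp only [starCol, _root_.mul_inv_rev, Units.val_mul, Matrix.mul_apply, mulVec, dotProduct, transpose_apply]
  exact Finset.sum_congr rfl fun _ _ => mul_comm _ _

theorem colM_mem [NeZero n] {M : GeneralLinearGroup (Fin n) R} (hM : M ∈ Elem n R) :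
    colM M 0 ∈ Ecol n R := ⟨M, hM, rfl⟩

theorem mulVec_mem [NeZero n] {g : GeneralLinearGroup (Fin n) R} (hg : g ∈ Elem n R)
    {u : Fin n → R} (hu : u ∈ Ecol n R) :
    (g : Matrix (Fin n) (Fin n) R) *ᵥ u ∈ Ecol n R := by
  obtain ⟨M, hM, rfl⟩ := hu
  exact ⟨g * M, mul_mem hg hM, (colM_mul g M 0).symm⟩

theorem tr_mem [NeZero n] {g : GeneralLinearGroup (Fin n) R} (hg : g ∈ Elem n R)
    {u : Fin n → R} (hu : u ∈ Ecol n R) :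
    (g : Matrix (Fin n) (Fin n) R)ᵀ *ᵥ u ∈ Ecol n R := by
  obtain ⟨N, hN, h⟩ := exists_transpose hg
  rw [← h]
  exact mulVec_mem hN hu

/-- moving index 0 to i while fixing the dual vector 1 -/
theorem exists_move [NeZero n] (hn : 4 ≤ n) {M : GeneralLinearGroup (Fin n) R}
    (hM : M ∈ Elem n R) (i : Fin n) (hi : i ≠ 1) :
    ∃ N ∈ Elem n R, colM N 0 = colM M i ∧ starCol N 1 = starCol M 1 := by
  have h01 := zero_ne_one' hn
  by_cases h0 : i = 0
  · subst h0; exact ⟨M, hM, rfl, rfl⟩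
  have h0' : (0 : Fin n) ≠ i := fun h => h0 h.symm
  refine ⟨M * (el 0 i h0' (-1) * el i 0 h0 1), mul_mem hM (mul_mem (el_mem _ _ _ _) (el_mem _ _ _ _)),
    ?_, ?_⟩
  · rw [colM_mul]
    have : colM (el 0 i h0' (-1 : R) * el i 0 h0 1) 0 = Pi.single i 1 := by
      ext k
      simp only [colM, el, Units.val_mul, transvection, Matrix.mul_add, Matrix.add_mul, Matrix.one_mul,
        Matrix.mul_one, single_mul_single_same, Matrix.add_apply, Matrix.one_apply, Matrix.single_apply,
        Pi.single_apply]
      by_cases hk : k = 0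
      · subst hk; simp [h0, h0']
      · by_cases hk' : k = i
        · subst hk'; simp [h0, h0']
        · simp [hk, hk', h0, h0', Ne.symm hk, Ne.symm hk']
    rw [this]
    ext k
    simp [colM]
  · rw [starCol_mul]
    have hinv : ∀ (i j : Fin n) (h : i ≠ j) (r : R),
        (((el i j h r)⁻¹ : GeneralLinearGroup (Fin n) R) : Matrix (Fin n) (Fin n) R) =
          transvection i j (-r) := fun _ _ _ _ => rfl
    have : starCol (el 0 i h0' (-1 : R) * el i 0 h0 1) 1 = Pi.single 1 1 := by
      ext k
      simp only [starCol, _root_.mul_inv_rev, Units.val_mul, hinv, transvection, Matrix.mul_add,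
        Matrix.add_mul, Matrix.one_mul, Matrix.mul_one, single_mul_single_same, Matrix.add_apply,
        Matrix.one_apply, Matrix.single_apply, Pi.single_apply]
      by_cases hk : k = 1
      · subst hk; simp [hi, h01]
      · simp only [h01, hi, hk, Ne.symm hk, false_and, if_false, add_zero]
    rw [this]
    ext k
    simp [starCol]

theorem exists_starCol [NeZero n] (hn : 4 ≤ n) {v : Fin n → R} (hv : v ∈ Ecol n R) :
    ∃ M ∈ Elem n R, v = starCol M 1 := by
  have h01 := zero_ne_one' hn
  obtain ⟨N, hN, rfl⟩ := hv
  obtain ⟨T, hT, h⟩ := exists_transpose hN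
  refine ⟨(el 1 0 h01.symm 1 * el 0 1 h01 (-1) * T)⁻¹,
    inv_mem (mul_mem (mul_mem (el_mem _ _ _ _) (el_mem _ _ _ _)) hT), ?_⟩
  have key : ∀ k, ((el 1 0 h01.symm 1 * el 0 1 h01 (-1) : GeneralLinearGroup (Fin n) R) :
      Matrix (Fin n) (Fin n) R) 1 k = (Pi.single 0 1 : Fin n → R) k := by
    intro k
    simp only [el, Units.val_mul, transvection, Matrix.mul_add, Matrix.add_mul, Matrix.one_mul,
        Matrix.mul_one, single_mul_single_same, Matrix.add_apply, Matrix.one_apply, Matrix.single_apply,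
        Pi.single_apply]
    by_cases hk : k = 0
    · subst hk; simp [h01, h01.symm]
    · by_cases hk' : k = 1
      · subst hk'; simp [h01, h01.symm]
      · simp [hk, hk', h01, Ne.symm hk, Ne.symm hk']
  ext i
  simp only [starCol, inv_inv]
  rw [Units.val_mul, Matrix.mul_apply]
  simp only [key, h]
  simp [Pi.single_apply]

theorem row_mem [NeZero n] (w : Fin n → R) (s : Finset (Fin n)) (hs : (0 : Fin n) ∉ s) :
    ∃ G ∈ Elem n R, (G : Matrix (Fin n) (Fin n) R) = 1 + ∑ j ∈ s, Matrix.single 0 j (w j) := by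
  induction s using Finset.induction_on with
  | empty => exact ⟨1, one_mem _, by simp⟩
  | insert a s ha ih =>
    rw [Finset.mem_insert, not_or] at hs
    obtain ⟨G, hG, h⟩ := ih hs.2
    refine ⟨el 0 a hs.1 (w a) * G, mul_mem (el_mem _ _ _ _) hG, ?_⟩
    have : Matrix.single (0 : Fin n) a (w a) * ∑ j ∈ s, Matrix.single (0 : Fin n) j (w j) = 0 := by
      rw [Finset.mul_sum]
      exact Finset.sum_eq_zero fun j _ => by
        rw [Matrix.single_mul_single_of_ne]; exact Ne.symm hs.1
    rw [Units.val_mul, h, Finset.sum_insert ha]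
    simp only [el, transvection, Matrix.mul_add, Matrix.add_mul, Matrix.one_mul, Matrix.mul_one, this]
    abel

theorem tMat_mem [NeZero n] {X : GeneralLinearGroup (Fin n) R} {u v : Fin n → R}
    (hu : u ∈ Ecol n R) (ho : u ⬝ᵥ v = 0) (hX : (X : Matrix (Fin n) (Fin n) R) = tMat u v) :
    X ∈ Elem n R := by
  obtain ⟨M, hM, rfl⟩ := hu
  change colM M 0 ⬝ᵥ v = 0 at ho
  change _ = tMat (colM M 0) v at hX
  set w := v ᵥ* (M : Matrix (Fin n) (Fin n) R) with hw
  have hw0 : w 0 = 0 := by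
    rw [← ho, dotProduct_comm]; rfl
  obtain ⟨G, hG, h⟩ := row_mem w (Finset.univ.erase 0) (by simp)
  have hs : ∑ j ∈ Finset.univ.erase 0, Matrix.single (0 : Fin n) j (w j)
      = vecMulVec (Pi.single 0 1) w := by
    rw [Finset.sum_erase _ (by simp [hw0])]
    ext i j
    rw [Matrix.sum_apply]
    simp only [Matrix.single_apply, vecMulVec_apply, Pi.single_apply]
    by_cases hi : i = 0
    · subst hi; simp
    · simp [hi, Ne.symm hi]
  have : X * M = M * G := by
    apply Units.ext
    rw [Units.val_mul, Units.val_mul, h, hs, hX, tMat, Matrix.add_mul, Matrix.mul_add, Matrix.one_mul,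
      Matrix.mul_one, vecMulVec_mul, mul_vecMulVec]
    congr 2
    ext k
    simp [colM]
  rw [eq_mul_inv_of_mul_eq this]
  exact mul_mem (mul_mem hM hG) (inv_mem hM)

section grp
variable [NeZero n] {I : Ideal R}

abbrev gF (u v : Fin n → R) (hu : u ∈ Ecol n R) (hv : ∀ i, v i ∈ I) (ho : u ⬝ᵥ v = 0) :
    StStar n R I := PresentedGroup.of (StarGen.F u v hu hv ho)

abbrev gS (u v : Fin n → R) (hu : ∀ i, u i ∈ I) (hv : v ∈ Ecol n R) (ho : u ⬝ᵥ v = 0) :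
    StStar n R I := PresentedGroup.of (StarGen.S u v hu hv ho)

theorem gS_add (u w v : Fin n → R) (hu : ∀ i, u i ∈ I) (hw : ∀ i, w i ∈ I)
      (huw : ∀ i, (u + w) i ∈ I) (hv : v ∈ Ecol n R) (o1 : u ⬝ᵥ v = 0)
      (o2 : w ⬝ᵥ v = 0) (o3 : (u + w) ⬝ᵥ v = 0) :
    gS u v hu hv o1 * gS w v hw hv o2 = gS (u + w) v huw hv o3 := by
  have := PresentedGroup.one_of_mem (rels := {w | StarRels n R I w})
    (StarRels.addS u w v hu hw huw hv o1 o2 o3)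
  rw [map_mul, map_mul, map_inv, mul_inv_eq_one] at this
  exact this

theorem gS_zero (v : Fin n → R) (hu : ∀ i, (0 : Fin n → R) i ∈ I) (hv : v ∈ Ecol n R)
    (o1 : 0 ⬝ᵥ v = 0) : gS (0 : Fin n → R) v hu hv o1 = 1 := by
  have h := gS_add (0 : Fin n → R) 0 v hu hu (by simp) hv o1 o1 (by simp)
  simp only [add_zero] at h
  exact mul_eq_left.mp h

theorem gF_conj (u v u' v' : Fin n → R) (hu : u ∈ Ecol n R) (hv : ∀ i, v i ∈ I)
      (o1 : dotProduct u v = 0) (hu' : u' ∈ Ecol n R) (hv' : ∀ i, v' i ∈ I)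
      (o2 : dotProduct u' v' = 0)
      (hu'' : Matrix.mulVec (tMat u v) u' ∈ Ecol n R)
      (hv'' : ∀ i, Matrix.mulVec (1 - Matrix.vecMulVec v u) v' i ∈ I)
      (o3 : dotProduct (Matrix.mulVec (tMat u v) u')
        (Matrix.mulVec (1 - Matrix.vecMulVec v u) v') = 0) :
    gF u v hu hv o1 * gF u' v' hu' hv' o2 * (gF u v hu hv o1)⁻¹ = gF _ _ hu'' hv'' o3 := by
  have := PresentedGroup.one_of_mem (rels := {w | StarRels n R I w})
    (StarRels.conjF u v u' v' hu hv o1 hu' hv' o2 hu'' hv'' o3)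
  rw [map_mul, map_mul, map_mul, map_inv, map_inv, mul_inv_eq_one] at this
  exact this

theorem gF_eq_gS {u v : Fin n → R} {a : R} (ha : a ∈ I)
    (h : ∃ M ∈ Elem n R, colM M 0 = u ∧ starCol M 1 = v) (h1 h2 h3 h4 h5 h6) :
    (gF u (a • v) h1 h2 h3 : StStar n R I) = gS (a • u) v h4 h5 h6 := by
  obtain ⟨M, hM, rfl, rfl⟩ := h
  have := PresentedGroup.one_of_mem (rels := {w | StarRels n R I w})
    (StarRels.coinc M hM a ha h1 h2 h3 h4 h5 h6)
  rw [map_mul, map_inv, mul_inv_eq_one] at this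
  exact this

/-- action by conjugation on the F generators -/
def Good (φ : StStar n R I →* GeneralLinearGroup (Fin n) R) (g : StStar n R I) : Prop :=
  φ g ∈ Elem n R ∧ ∀ (u v : Fin n → R) (hu : u ∈ Ecol n R) (hv : ∀ i, v i ∈ I) (ho : u ⬝ᵥ v = 0)
    (u' v' : Fin n → R) (hu' : u' ∈ Ecol n R) (hv' : ∀ i, v' i ∈ I) (ho' : u' ⬝ᵥ v' = 0),
    u' = (φ g : Matrix (Fin n) (Fin n) R) *ᵥ u →
    v = (φ g : Matrix (Fin n) (Fin n) R)ᵀ *ᵥ v' →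
    g * gF u v hu hv ho * g⁻¹ = gF u' v' hu' hv' ho'

theorem mulVec_memI (A : Matrix (Fin n) (Fin n) R) {v : Fin n → R} (hv : ∀ i, v i ∈ I) (i : Fin n) :
    (A *ᵥ v) i ∈ I := by
  simp only [mulVec, dotProduct]
  exact Ideal.sum_mem _ fun j _ => I.mul_mem_left _ (hv j)

theorem cancel1 (g : GeneralLinearGroup (Fin n) R) (v : Fin n → R) :
    (g : Matrix (Fin n) (Fin n) R) *ᵥ
      (((g⁻¹ : GeneralLinearGroup (Fin n) R) : Matrix (Fin n) (Fin n) R) *ᵥ v) = v := by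
  rw [mulVec_mulVec, ← Units.val_mul]; simp

theorem cancel2 (g : GeneralLinearGroup (Fin n) R) (v : Fin n → R) :
    ((g⁻¹ : GeneralLinearGroup (Fin n) R) : Matrix (Fin n) (Fin n) R) *ᵥ
      ((g : Matrix (Fin n) (Fin n) R) *ᵥ v) = v := by
  rw [mulVec_mulVec, ← Units.val_mul]; simp

theorem cancel3 (g : GeneralLinearGroup (Fin n) R) (v : Fin n → R) :
    (g : Matrix (Fin n) (Fin n) R)ᵀ *ᵥ
      (((g⁻¹ : GeneralLinearGroup (Fin n) R) : Matrix (Fin n) (Fin n) R)ᵀ *ᵥ v) = v := by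
  rw [mulVec_mulVec, ← transpose_mul, ← Units.val_mul]; simp

theorem cancel4 (g : GeneralLinearGroup (Fin n) R) (v : Fin n → R) :
    ((g⁻¹ : GeneralLinearGroup (Fin n) R) : Matrix (Fin n) (Fin n) R)ᵀ *ᵥ
      ((g : Matrix (Fin n) (Fin n) R)ᵀ *ᵥ v) = v := by
  rw [mulVec_mulVec, ← transpose_mul, ← Units.val_mul]; simp

theorem dot_tr (A : Matrix (Fin n) (Fin n) R) (u v : Fin n → R) :
    (A *ᵥ u) ⬝ᵥ v = u ⬝ᵥ (Aᵀ *ᵥ v) := by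
  rw [mulVec_transpose, dotProduct_comm, dotProduct_mulVec, dotProduct_comm]

/-- the subgroup of good elements -/
def goodSub (φ : StStar n R I →* GeneralLinearGroup (Fin n) R) : Subgroup (StStar n R I) where
  carrier := {g | Good φ g}
  one_mem' := by
    refine ⟨by simp [one_mem], ?_⟩
    intro u v hu hv ho u' v' hu' hv' ho' h1 h2
    simp at h1 h2
    subst h1; subst h2
    simp
  mul_mem' := by
    rintro a b ⟨ha, ha'⟩ ⟨hb, hb'⟩
    refine ⟨by rw [map_mul]; exact mul_mem ha hb, ?_⟩
    intro u v hu hv ho u' v' hu' hv' ho' h1 h2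
    rw [map_mul, Units.val_mul] at h1 h2
    rw [← mulVec_mulVec] at h1
    rw [transpose_mul, ← mulVec_mulVec] at h2
    have e1 := hb' u v hu hv ho ((φ b : Matrix (Fin n) (Fin n) R) *ᵥ u)
      ((φ a : Matrix (Fin n) (Fin n) R)ᵀ *ᵥ v') (mulVec_mem hb hu) (mulVec_memI _ hv')
      (by rw [dot_tr, ← h2, ho]) rfl h2
    have e2 := ha' _ _ (mulVec_mem hb hu) (mulVec_memI _ hv')
      (by rw [dot_tr, ← h2, ho]) u' v' hu' hv' ho' h1 rfl
    rw [← e2, ← e1]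
    group
  inv_mem' := by
    rintro a ⟨ha, ha'⟩
    refine ⟨by rw [map_inv]; exact inv_mem ha, ?_⟩
    intro u v hu hv ho u' v' hu' hv' ho' h1 h2
    rw [map_inv] at h1 h2
    have e := ha' u' v' hu' hv' ho' u v hu hv ho (by rw [h1, cancel1]) (by rw [h2, cancel3])
    rw [← e]
    group

theorem tr_vec (u v : Fin n → R) : (vecMulVec u v)ᵀ = vecMulVec v u := transpose_vecMulVec u v

theorem F_good (φ : StStar n R I →* GeneralLinearGroup (Fin n) R)
    (hφF : ∀ (u v : Fin n → R) (hu : u ∈ Ecol n R) (hv : ∀ i, v i ∈ I)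
      (ho : dotProduct u v = 0),
      (φ (gF u v hu hv ho) : Matrix (Fin n) (Fin n) R) = tMat u v)
    (u v : Fin n → R) (hu : u ∈ Ecol n R) (hv : ∀ i, v i ∈ I)
      (ho : dotProduct u v = 0) : gF u v hu hv ho ∈ goodSub φ := by
  refine ⟨tMat_mem hu ho (hφF _ _ _ _ _), ?_⟩
  intro x y hx hy ho1 x' y' hx' hy' ho' h1 h2
  rw [hφF] at h1 h2
  have h3 : y' = (1 - vecMulVec v u) *ᵥ y := by
    rw [h2, mulVec_mulVec, tMat, transpose_add, tr_vec, transpose_one]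
    have : vecMulVec v u * vecMulVec v u = 0 := by
      rw [vecMulVec_mul_vecMulVec, ho]; simp
    simp [Matrix.sub_mul, Matrix.mul_add, this]
  subst h1
  subst h3
  exact gF_conj _ _ _ _ _ _ _ _ _ _ _ _ _

/-- partial sums of columns -/
abbrev psum (M : GeneralLinearGroup (Fin n) R) (a : Fin n → R) (s : Finset (Fin n)) : Fin n → R :=
  ∑ i ∈ s, a i • colM M i

theorem psum_mem (M : GeneralLinearGroup (Fin n) R) {a : Fin n → R} (ha : ∀ i, a i ∈ I)
    (s : Finset (Fin n)) (k : Fin n) : psum M a s k ∈ I := by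
  rw [psum, Finset.sum_apply]
  exact Ideal.sum_mem _ fun j _ => I.mul_mem_right _ (ha j)

theorem col_dot (M : GeneralLinearGroup (Fin n) R) (i j : Fin n) (h : i ≠ j) :
    colM M i ⬝ᵥ starCol M j = 0 := by
  have : ((M⁻¹ * M : GeneralLinearGroup (Fin n) R) : Matrix (Fin n) (Fin n) R) j i = 0 := by
    simp [Matrix.one_apply, h.symm]
  rw [dotProduct_comm, ← this, Units.val_mul, Matrix.mul_apply]
  rfl

theorem psum_dot (M : GeneralLinearGroup (Fin n) R) (a : Fin n → R) (s : Finset (Fin n)) (j : Fin n)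
    (hs : j ∉ s) : psum M a s ⬝ᵥ starCol M j = 0 := by
  rw [psum, sum_dotProduct]
  refine Finset.sum_eq_zero fun i hi => ?_
  have hij : i ≠ j := fun h => hs (h ▸ hi)
  rw [smul_dotProduct, col_dot _ _ _ hij, smul_zero]

theorem starCol_mem (hn : 4 ≤ n) {M : GeneralLinearGroup (Fin n) R} (hM : M ∈ Elem n R) :
    starCol M 1 ∈ Ecol n R := by
  obtain ⟨N, hN, h⟩ := exists_transpose (inv_mem hM)
  have h01 := zero_ne_one' hn
  have : starCol M 1 = (N : Matrix (Fin n) (Fin n) R) *ᵥ (Pi.single 1 1) := by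
    rw [h]; ext k; simp [starCol]
  rw [this]
  refine mulVec_mem hN ⟨el 0 1 h01 (-1) * el 1 0 h01.symm 1,
    mul_mem (el_mem _ _ _ _) (el_mem _ _ _ _), ?_⟩
  ext k
  simp only [el, Units.val_mul, transvection, Matrix.mul_add, Matrix.add_mul, Matrix.one_mul,
        Matrix.mul_one, single_mul_single_same, Matrix.add_apply, Matrix.one_apply, Matrix.single_apply,
        Pi.single_apply]
  by_cases hk : k = 0
  · subst hk; simp only [h01, h01.symm]; simp
  · by_cases hk' : k = 1
    · subst hk'; simp [h01, h01.symm]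
    · simp [hk, hk', Ne.symm hk, Ne.symm hk']

theorem psum_ind (hn : 4 ≤ n) {M : GeneralLinearGroup (Fin n) R} (hM : M ∈ Elem n R)
    {a : Fin n → R} (ha : ∀ i, a i ∈ I) (f : StStar n R I →* StStar n R I)
    {M' : GeneralLinearGroup (Fin n) R} (hM' : M' ∈ Elem n R) (P : Subgroup (StStar n R I))
    (hP : ∀ u v hu hv ho, gF u v hu hv ho ∈ P)
    (hf : ∀ i ≠ 1, ∀ h1 h2 h3 h4 h5 h6, f (gF (colM M i) (a i • starCol M 1) h1 h2 h3) =
      gF (colM M' i) (a i • starCol M' 1) h4 h5 h6)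
    (s : Finset (Fin n)) (hs : (1 : Fin n) ∉ s) :
    gS (psum M a s) (starCol M 1) (psum_mem M ha s) (starCol_mem hn hM) (psum_dot M a s 1 hs) ∈ P ∧
    f (gS (psum M a s) (starCol M 1) (psum_mem M ha s) (starCol_mem hn hM) (psum_dot M a s 1 hs)) =
     gS (psum M' a s) (starCol M' 1) (psum_mem M' ha s) (starCol_mem hn hM')
       (psum_dot M' a s 1 hs) := by
  induction s using Finset.induction_on with
  | empty =>
    simp only [psum, Finset.sum_empty, gS_zero, map_one, and_true]
    exact one_mem _
  | insert i s hi ih =>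
    have hs' := hs
    rw [Finset.mem_insert, not_or] at hs'
    have hi1 : i ≠ 1 := Ne.symm hs'.1
    obtain ⟨ih1, ih2⟩ := ih hs'.2
    have key : ∀ {M : GeneralLinearGroup (Fin n) R} (hM : M ∈ Elem n R), ∃ h1 h2 h3,
        gS (psum M a (insert i s)) (starCol M 1) (psum_mem M ha _) (starCol_mem hn hM)
        (psum_dot M a _ 1 hs) = gF (colM M i) (a i • starCol M 1) h1 h2 h3 *
        gS (psum M a s) (starCol M 1) (psum_mem M ha _) (starCol_mem hn hM)
        (psum_dot M a _ 1 hs'.2) := by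
      intro M hM
      obtain ⟨N, hN, e1, e2⟩ := exists_move hn hM i hi1
      have h1 : colM M i ∈ Ecol n R := e1 ▸ colM_mem hN
      have h2 : ∀ k, (a i • starCol M 1) k ∈ I := fun k => I.mul_mem_right _ (ha i)
      have h3 : colM M i ⬝ᵥ (a i • starCol M 1) = 0 := by
        rw [dotProduct_smul, col_dot _ _ _ hi1, smul_zero]
      have h4 : ∀ k, (a i • colM M i) k ∈ I := fun k => I.mul_mem_right _ (ha i)
      have h6 : (a i • colM M i) ⬝ᵥ starCol M 1 = 0 := by
        rw [smul_dotProduct, col_dot _ _ _ hi1, smul_zero]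
      refine ⟨h1, h2, h3, ?_⟩
      rw [gF_eq_gS (ha i) ⟨N, hN, e1, e2⟩ h1 h2 h3 h4 (starCol_mem hn hM) h6]
      have hps : psum M a (insert i s) = a i • colM M i + psum M a s := Finset.sum_insert hi
      rw [gS_add _ _ _ _ _ (by rw [← hps]; exact psum_mem M ha _) _ _ _
        (by rw [← hps]; exact psum_dot M a _ 1 hs)]
      congr 2
    obtain ⟨h1, h2, h3, e⟩ := key hM
    obtain ⟨h4, h5, h6, e'⟩ := key hM'
    rw [e, e', map_mul, ih2, hf i hi1 h1 h2 h3 h4 h5 h6]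
    exact ⟨mul_mem (hP _ _ _ _ _) ih1, rfl⟩

theorem exists_psum {M : GeneralLinearGroup (Fin n) R} {u : Fin n → R} (hu : ∀ i, u i ∈ I)
    (ho : u ⬝ᵥ starCol M 1 = 0) :
    ∃ a : Fin n → R, (∀ i, a i ∈ I) ∧ u = psum M a (Finset.univ.erase 1) := by
  refine ⟨((M⁻¹ : GeneralLinearGroup (Fin n) R) : Matrix (Fin n) (Fin n) R) *ᵥ u,
    mulVec_memI _ hu, ?_⟩
  rw [psum, Finset.sum_erase]
  · conv_lhs => rw [← cancel1 M u]
    ext k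
    rw [Finset.sum_apply]
    generalize ((M⁻¹ : GeneralLinearGroup (Fin n) R) : Matrix (Fin n) (Fin n) R) *ᵥ u = w
    change ∑ c, (M : Matrix (Fin n) (Fin n) R) k c * w c = _
    refine Finset.sum_congr rfl fun c _ => ?_
    rw [mul_comm]
    rfl
  · have : (((M⁻¹ : GeneralLinearGroup (Fin n) R) : Matrix (Fin n) (Fin n) R) *ᵥ u) 1 = 0 := by
      rw [← ho, dotProduct_comm]; rfl
    rw [this, zero_smul]

theorem main (hn : 4 ≤ n) (φ : StStar n R I →* GeneralLinearGroup (Fin n) R)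
    (hφF : ∀ (u v : Fin n → R) (hu : u ∈ Ecol n R) (hv : ∀ i, v i ∈ I)
      (ho : dotProduct u v = 0),
      (φ (gF u v hu hv ho) : Matrix (Fin n) (Fin n) R) = tMat u v)
    (g : StStar n R I) : g ∈ goodSub φ := by
  have : (⊤ : Subgroup (StStar n R I)) ≤ goodSub φ := by
    rw [← PresentedGroup.closure_range_of, Subgroup.closure_le]
    rintro _ ⟨x, rfl⟩
    cases x with
    | F u v hu hv ho => exact F_good φ hφF _ _ _ _ _
    | S u v hu hv ho =>
      obtain ⟨M, hM, rfl⟩ := exists_starCol hn hv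
      obtain ⟨a, ha, rfl⟩ := exists_psum hu ho
      exact (psum_ind hn hM ha (MonoidHom.id _) hM _ (F_good φ hφF)
        (fun _ _ _ _ _ _ _ _ => rfl) (Finset.univ.erase 1) (by simp)).1
  exact this trivial

end grp
end StAux

theorem stmt11 (n : ℕ) (hn : 4 ≤ n) [NeZero n] (R : Type) [CommRing R] (I : Ideal R)
    (φ : StStar n R I →* Matrix.GeneralLinearGroup (Fin n) R)
    (hφF : ∀ (u v : Fin n → R) (hu : u ∈ Ecol n R) (hv : ∀ i, v i ∈ I)
      (ho : dotProduct u v = 0),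
      (φ (PresentedGroup.of (StarGen.F u v hu hv ho)) : Matrix (Fin n) (Fin n) R) = tMat u v)
    (hφS : ∀ (u v : Fin n → R) (hu : ∀ i, u i ∈ I) (hv : v ∈ Ecol n R)
      (ho : dotProduct u v = 0),
      (φ (PresentedGroup.of (StarGen.S u v hu hv ho)) : Matrix (Fin n) (Fin n) R) = tMat u v) :
    ∀ (g : StStar n R I) (u v : Fin n → R) (hu : ∀ i, u i ∈ I) (hv : v ∈ Ecol n R)
      (ho : dotProduct u v = 0)
      (hu' : ∀ i, Matrix.mulVec (φ g : Matrix (Fin n) (Fin n) R) u i ∈ I)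
      (hv' : Matrix.mulVec (Matrix.transpose (((φ g)⁻¹ : Matrix.GeneralLinearGroup (Fin n) R) :
        Matrix (Fin n) (Fin n) R)) v ∈ Ecol n R)
      (ho' : dotProduct (Matrix.mulVec (φ g : Matrix (Fin n) (Fin n) R) u)
        (Matrix.mulVec (Matrix.transpose (((φ g)⁻¹ : Matrix.GeneralLinearGroup (Fin n) R) :
          Matrix (Fin n) (Fin n) R)) v) = 0),
      g * PresentedGroup.of (StarGen.S u v hu hv ho) * g⁻¹ =
        PresentedGroup.of (StarGen.S (Matrix.mulVec (φ g : Matrix (Fin n) (Fin n) R) u)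
          (Matrix.mulVec (Matrix.transpose (((φ g)⁻¹ : Matrix.GeneralLinearGroup (Fin n) R) :
            Matrix (Fin n) (Fin n) R)) v) hu' hv' ho') := by
  intro g u v hu hv ho hu' hv' ho'
  obtain ⟨hg, hc⟩ := StAux.main hn φ hφF g
  obtain ⟨M, hM, rfl⟩ := StAux.exists_starCol hn hv
  obtain ⟨a, ha, rfl⟩ := StAux.exists_psum hu ho
  have h := (StAux.psum_ind hn hM ha (MulAut.conj g).toMonoidHom (mul_mem hg hM) ⊤
    (fun _ _ _ _ _ => trivial) (fun i hi h1 h2 h3 h4 h5 h6 => by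
      refine hc _ _ _ _ _ _ _ _ _ _ (StAux.colM_mul _ _ _) ?_
      rw [StAux.starCol_mul, Matrix.mulVec_smul, StAux.cancel3]) (Finset.univ.erase 1) (by simp)).2
  refine Eq.trans h ?_
  have e1 : StAux.psum (φ g * M) a (Finset.univ.erase 1) =
      Matrix.mulVec (φ g : Matrix (Fin n) (Fin n) R) (StAux.psum M a (Finset.univ.erase 1)) := by
    simp only [StAux.psum, StAux.colM_mul, Matrix.mulVec_sum, Matrix.mulVec_smul]
  have e2 := StAux.starCol_mul (φ g) M 1
  simp only [StAux.gS, e1, e2]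
end
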